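/- arXiv:1603.01191 — 8 statements merged into one kernel-verified Lean document; each statement's English description precedes it below -/
import Mathlib

section
/- Let I be a ROS-UET instance on a network G=(V,E,c,v*) and let H be a Hamiltonian cycle of G with total travel time c(H). Then there exists a feasible schedule for I with makespan at most c(H) + n + m − 1. -/
/-- A network: a connected simple graph with positive integer travel times
and a distinguished depot vertex. -/
structure Network (V : Type*) where
  G : SimpleGraph V
  conn : G.Connected
  c : V → V → ℕ
  csymm : ∀ u v : V, c u v = c v u
  cpos : ∀ u v : V, G.Adj u v → 0 < c u v
  depot : V

/-- A route with `s` stays; stay `k` (for `k < s`) is `(a k, v k, b k)`. -/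
structure Route (V : Type*) where
  s : ℕ
  a : ℕ → ℕ
  v : ℕ → V
  b : ℕ → ℕ

/-- The length of a route: the end of its last stay. -/
def Route.length {V : Type*} (R : Route V) : ℕ := R.b (R.s - 1)

/-- `R` is a valid route in the network `N`. -/
def IsRoute {V : Type*} (N : Network V) (R : Route V) : Prop :=
  0 < R.s ∧ R.v 0 = N.depot ∧ R.v (R.s - 1) = N.depot ∧ R.a 0 = 0 ∧
    (∀ k < R.s, R.a k ≤ R.b k) ∧
    ∀ k, k + 1 < R.s →
      N.G.Adj (R.v k) (R.v (k + 1)) ∧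
      R.a (k + 1) = R.b k + N.c (R.v k) (R.v (k + 1))

/-- Routes `R` (one per machine) are compatible with the (unit execution time)
schedule `S`: each machine stays at the location of each job while processing it. -/
def Compatible {V : Type*} {n m : ℕ} (loc : Fin n → V)
    (S : Fin n → Fin m → ℕ) (R : Fin m → Route V) : Prop :=
  ∀ (i : Fin n) (q : Fin m), ∃ k < (R q).s,
    (R q).v k = loc i ∧ (R q).a k ≤ S i q ∧ S i q + 1 ≤ (R q).b k

/-- A schedule for a ROS-UET instance is feasible. -/
def Feasible {V : Type*} {n m : ℕ} (N : Network V) (loc : Fin n → V)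
    (S : Fin n → Fin m → ℕ) : Prop :=
  (∀ (i j : Fin n) (q : Fin m), i ≠ j → S i q ≠ S j q) ∧
  (∀ (i : Fin n) (q r : Fin m), q ≠ r → S i q ≠ S i r) ∧
  ∃ R : Fin m → Route V, (∀ q, IsRoute N (R q)) ∧ Compatible loc S R

/-- The makespan of a schedule: the least `L` such that there are compatible
routes, each of length at most `L`. -/
noncomputable def makespan {V : Type*} {n m : ℕ} (N : Network V) (loc : Fin n → V)
    (S : Fin n → Fin m → ℕ) : ℕ :=
  sInf {L | ∃ R : Fin m → Route V, (∀ q, IsRoute N (R q)) ∧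
    Compatible loc S R ∧ ∀ q, Route.length (R q) ≤ L}

/-- The total travel time of a walk in a graph with travel times `c`. -/
def walkWeight {V : Type*} {G : SimpleGraph V} (c : V → V → ℕ) {u w : V}
    (p : G.Walk u w) : ℕ :=
  (p.darts.map fun d => c d.toProd.1 d.toProd.2).sum

theorem walkWeight_eq_sum {V : Type*} {G : SimpleGraph V} (c : V → V → ℕ) {u w : V}
    (p : G.Walk u w) :
    walkWeight c p = ∑ j ∈ Finset.range p.length, c (p.getVert j) (p.getVert (j + 1)) := by
  induction p with
  | nil => simp [walkWeight]
  | cons h p ih =>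
    rw [SimpleGraph.Walk.length_cons, Finset.sum_range_succ']
    simp only [SimpleGraph.Walk.getVert_cons_succ, SimpleGraph.Walk.getVert_zero]
    rw [← ih]
    simp [walkWeight, add_comm]

theorem main_aux {V : Type*} {n m : ℕ}
    (N : Network V) (loc : Fin n → V) (hm : 0 < m)
    (p : N.G.Walk N.depot N.depot) (hp : ∀ x, x ∈ p.support) :
    ∃ S : Fin n → Fin m → ℕ, Feasible N loc S ∧
      makespan N loc S ≤ walkWeight N.c p + n + m - 1 := by
  have hpos : ∀ i : Fin n, ∃ k, p.getVert k = loc i ∧ k ≤ p.length := fun i =>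
    SimpleGraph.Walk.mem_support_iff_exists_getVert.1 (hp (loc i))
  choose pos hpos hposle using hpos
  let W : ℕ → ℕ := fun k => ∑ j ∈ Finset.range k, N.c (p.getVert j) (p.getVert (j + 1))
  have hWmono : Monotone W := fun a b hab =>
    Finset.sum_le_sum_of_subset (Finset.range_mono hab)
  let key : Fin n → ℕ ×ₗ Fin n := fun i => toLex (pos i, i)
  have hkey : ∀ i j, key i < key j ↔ pos i < pos j ∨ pos i = pos j ∧ i < j := fun i j => by
    simp [key, Prod.Lex.toLex_lt_toLex]
  let r : Fin n → ℕ := fun i => (Finset.univ.filter fun j => key j < key i).card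
  let cnt : ℕ → ℕ := fun k => (Finset.univ.filter fun j => pos j < k).card
  let t : Fin n → ℕ := fun i => W (pos i) + r i
  have hcnt : Monotone cnt := fun a b hab => Finset.card_le_card (by
    intro j; simp only [Finset.mem_filter, Finset.mem_univ, true_and]; omega)
  have ht : ∀ i j, key i < key j → t i < t j := by
    intro i j h
    have h1 : W (pos i) ≤ W (pos j) := hWmono (by rcases (hkey i j).1 h with h | h <;> omega)
    have h2 : r i < r j := by
      apply Finset.card_lt_card
      rw [Finset.ssubset_iff_of_subset]
      · exact ⟨i, by simpa using h, by simp⟩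
      · intro k; simp only [Finset.mem_filter, Finset.mem_univ, true_and]
        exact fun hk => hk.trans h
    simp only [t]; omega
  have htinj : ∀ i j, i ≠ j → t i ≠ t j := by
    intro i j hij
    rcases lt_trichotomy (key i) (key j) with h | h | h
    · exact (ht _ _ h).ne
    · exact absurd (congrArg (fun x => (ofLex x).2) h) hij
    · exact (ht _ _ h).ne'
  have hr1 : ∀ i, cnt (pos i) ≤ r i := fun i => Finset.card_le_card (by
    intro j; simp only [Finset.mem_filter, Finset.mem_univ, true_and, hkey]; exact Or.inl)
  have hr2 : ∀ i, r i + 1 ≤ cnt (pos i + 1) := by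
    intro i
    apply Finset.card_lt_card
    rw [Finset.ssubset_iff_of_subset]
    · exact ⟨i, by simp, by simp⟩
    · intro k; simp only [Finset.mem_filter, Finset.mem_univ, true_and, hkey]
      omega
  have hcn : ∀ k, cnt k ≤ n := fun k => by
    simpa using Finset.card_le_univ (Finset.univ.filter fun j => pos j < k)
  let R : Fin m → Route V := fun q =>
    { s := p.length + 1
      a := fun k => if k = 0 then 0 else W k + q + cnt k
      v := p.getVert
      b := fun k => W k + q + cnt (k + 1) }
  have ha : ∀ q k, (R q).a k ≤ W k + q + cnt k := by
    intro q k; simp only [R]; split_ifs <;> omega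
  have hR : ∀ q, IsRoute N (R q) := by
    intro q
    refine ⟨by simp [R], by simp [R], by simp [R], by simp [R], ?_, ?_⟩
    · intro k _
      refine (ha q k).trans ?_
      have := hcnt (Nat.le_succ k)
      simp only [R]; simp only [Nat.succ_eq_add_one] at this; omega
    · intro k hk
      have hk' : k < p.length := by simp only [R] at hk; omega
      refine ⟨p.adj_getVert_succ hk', ?_⟩
      simp only [R, W, Finset.sum_range_succ]
      simp; omega
  have hC : Compatible loc (fun i q => t i + (q : ℕ)) R := by
    intro i q
    refine ⟨pos i, Nat.lt_succ_of_le (hposle i), hpos i, (ha q _).trans ?_, ?_⟩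
    · have := hr1 i; simp only [t]; omega
    · have := hr2 i; simp only [t, R]; omega
  refine ⟨fun i q => t i + (q : ℕ), ⟨?_, ?_, R, hR, hC⟩, Nat.sInf_le ⟨R, hR, hC, ?_⟩⟩
  · intro i j q hij h
    exact htinj i j hij (by simpa using h)
  · intro i q r hqr h
    exact hqr (Fin.ext (by simpa using h))
  · intro q
    have h1 := hcn (p.length + 1)
    have h2 := q.2
    rw [walkWeight_eq_sum]
    change W p.length + q + cnt (p.length + 1) ≤ W p.length + n + m - 1
    omega

/-- For every ROS-UET instance and every Hamiltonian cycle `H`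
of its network, there is a feasible schedule with makespan at most
`c(H) + n + m - 1`. -/
theorem statement2 {V : Type*} [Fintype V] [DecidableEq V] {n m : ℕ}
    (N : Network V) (loc : Fin n → V) (hm : 0 < m)
    (u : V) (H : N.G.Walk u u) (hH : H.IsHamiltonianCycle) :
    ∃ S : Fin n → Fin m → ℕ, Feasible N loc S ∧
      makespan N loc S ≤ walkWeight N.c H + n + m - 1 := by
  have hd := hH.mem_support N.depot
  have hw : walkWeight N.c (H.rotate _ hd) = walkWeight N.c H :=
    ((H.rotate_darts _ hd).perm.map _).sum_eq
  rw [← hw]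
  refine main_aux N loc hm _ fun x => ?_
  have := hH.mem_support x
  simpa using this
end

section
/- Let I be a ROS-UET instance on a network G=(V,E,c,v*) and let H be a Hamiltonian cycle of G with total travel time c(H). Then there exists a feasible schedule for I with makespan at most 2·c(H) + max{n, m}. -/
/-- Ranks of the jobs, sorted by position (ties broken by index). -/
theorem exists_rank {n : ℕ} (pos : Fin n → ℕ) : ∃ (r : Fin n → ℕ) (P : ℕ → ℕ),
    Function.Injective r ∧ Monotone P ∧ P 0 = 0 ∧ (∀ k, P k ≤ n) ∧
    ∀ i, P (pos i) ≤ r i ∧ r i < P (pos i + 1) := by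
  classical
  let A : Fin n → Finset (Fin n) := fun i =>
    Finset.univ.filter fun j => pos j < pos i ∨ (pos j = pos i ∧ j < i)
  have key : ∀ i j : Fin n, (pos j < pos i ∨ (pos j = pos i ∧ j < i)) →
      (A j).card < (A i).card := by
    intro i j hij
    apply Finset.card_lt_card
    rw [Finset.ssubset_iff_of_subset]
    · exact ⟨j, by simp [A, hij], by simp [A]⟩
    · intro x hx
      simp only [A, Finset.mem_filter, Finset.mem_univ, true_and] at hx ⊢
      omega
  refine ⟨fun i => (A i).card, fun k => (Finset.univ.filter fun j => pos j < k).card,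
    ?_, ?_, ?_, ?_, ?_⟩
  · intro i j hij
    by_contra hne
    have h1 := key i j
    have h2 := key j i
    simp only at hij
    have : (i : ℕ) ≠ j := fun h => hne (Fin.ext h)
    simp only [Fin.lt_def] at h1 h2
    omega
  · intro k l hkl
    apply Finset.card_le_card
    intro x hx
    simp only [Finset.mem_filter, Finset.mem_univ, true_and] at hx ⊢
    omega
  · simp
  · intro k
    exact (Finset.card_le_univ _).trans (by simp)
  · intro i
    constructor
    · apply Finset.card_le_card
      intro x hx
      simp only [A, Finset.mem_filter, Finset.mem_univ, true_and] at hx ⊢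
      omega
    · apply Finset.card_lt_card
      rw [Finset.ssubset_iff_of_subset]
      · exact ⟨i, by simp, by simp [A]⟩
      · intro x hx
        simp only [A, Finset.mem_filter, Finset.mem_univ, true_and] at hx ⊢
        omega

theorem main_aux_s3 {V : Type*} {n m : ℕ}
    (N : Network V) (loc : Fin n → V) (h : ℕ) (hh : 0 < h) (w : ℕ → V)
    (hw0 : w 0 = N.depot) (hwp : ∀ k, w (h + k) = w k)
    (hadj : ∀ k, N.G.Adj (w k) (w (k + 1)))
    (hloc : ∀ i, ∃ k < h, w k = loc i) :
    ∃ S : Fin n → Fin m → ℕ, Feasible N loc S ∧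
      makespan N loc S ≤
        2 * (∑ j ∈ Finset.range h, N.c (w j) (w (j + 1))) + max n m := by
  choose pos hposlt hpos using hloc
  obtain ⟨r, P, hrinj, hPmono, hP0, hPn, hr⟩ := exists_rank pos
  obtain ⟨L, hL⟩ : ∃ L, L = max n m := ⟨_, rfl⟩
  have hnL : n ≤ L := hL ▸ le_max_left _ _
  have hmL : m ≤ L := hL ▸ le_max_right _ _
  obtain ⟨D, hD⟩ : ∃ D : ℕ → ℕ,
    D = fun k => ∑ j ∈ Finset.range k, N.c (w j) (w (j + 1)) := ⟨_, rfl⟩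
  have hD0 : D 0 = 0 := by simp [hD]
  have hDs : ∀ k, D (k + 1) = D k + N.c (w k) (w (k + 1)) := by
    intro k; simp [hD, Finset.sum_range_succ]
  have hDmono : Monotone D := monotone_nat_of_le_succ fun k => by rw [hDs]; omega
  have hDp : ∀ k, D (h + k) = D h + D k := by
    intro k
    simp only [hD, Finset.sum_range_add]
    congr 1
    apply Finset.sum_congr rfl
    intro x _
    rw [add_assoc, hwp, hwp]
  have hDh : (∑ j ∈ Finset.range h, N.c (w j) (w (j + 1))) = D h := by rw [hD]
  rw [hDh, ← hL]
  let S : Fin n → Fin m → ℕ := fun i q => D (pos i) +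
    (if L ≤ r i + q then r i + q - L else D h + r i + q)
  let g : Fin m → ℕ → ℕ := fun q k =>
    if k ≤ h then P k + q - L else min (P (k - h) + q) L
  have hg : ∀ q k, g q k ≤ g q (k + 1) := by
    intro q k
    have h1 : P k ≤ P (k + 1) := hPmono (by omega)
    have h2 : P (k - h) ≤ P (k + 1 - h) := hPmono (by omega)
    have h3 := hPn k
    have h4 := q.2
    simp only [g]
    split_ifs <;> omega
  let R : Fin m → Route V := fun q =>
    { s := 2 * h + 1, a := fun k => D k + g q k, v := w, b := fun k => D k + g q (k + 1) }
  have hR : ∀ q, IsRoute N (R q) := by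
    intro q
    refine ⟨by simp [R], hw0, ?_, ?_, ?_, ?_⟩
    · have : 2 * h + 1 - 1 = h + (h + 0) := by omega
      simp only [R]
      rw [this, hwp, hwp, hw0]
    · have := q.2
      simp only [R, g, hD0, hP0]
      simp
      omega
    · intro k _
      have := hg q k
      simp only [R]
      omega
    · intro k _
      refine ⟨hadj k, ?_⟩
      simp only [R, hDs]
      omega
  have hC : Compatible loc S R := by
    intro i q
    have h1 := hr i
    have h2 := hposlt i
    have h3 := q.2
    have h4 := hPn (pos i + 1)
    have h5 := hPn (pos i)
    by_cases hc : L ≤ r i + q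
    · refine ⟨pos i, by simp only [R]; omega, hpos i, ?_, ?_⟩
      · simp only [R, S, g, if_pos hc]
        rw [if_pos (by omega)]
        omega
      · simp only [R, S, g, if_pos hc]
        rw [if_pos (by omega)]
        omega
    · refine ⟨h + pos i, by simp only [R]; omega, (hwp _).trans (hpos i), ?_, ?_⟩
      · simp only [R, S, g, if_neg hc, hDp, Nat.add_sub_cancel_left]
        have := hPn (h + pos i)
        split_ifs <;> omega
      · simp only [R, S, g, if_neg hc, hDp]
        rw [if_neg (by omega), show h + pos i + 1 - h = pos i + 1 by omega]
        omega
  have hlt : ∀ i j q, r i < r j → S i q ≠ S j q := by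
    intro i j q hij
    have hp : pos i ≤ pos j := by
      by_contra hcon
      have h1 : P (pos j + 1) ≤ P (pos i) := hPmono (by omega)
      have h2 := hr i
      have h3 := hr j
      omega
    have h1 := hDmono hp
    have h2 := hDmono (hposlt j).le
    have h3 := hr j
    have h4 := hPn (pos j + 1)
    simp only [S]
    split_ifs <;> omega
  refine ⟨S, ⟨?_, ?_, R, hR, hC⟩, ?_⟩
  · intro i j q hij
    rcases lt_or_gt_of_ne (fun hh => hij (hrinj hh) : r i ≠ r j) with h1 | h1
    · exact hlt i j q h1
    · exact (hlt j i q h1).symm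
  · intro i q q' hq
    have h0 : (q : ℕ) ≠ q' := fun h => hq (Fin.ext h)
    have h1 := q.2
    have h2 := q'.2
    simp only [S]
    split_ifs <;> omega
  · apply Nat.sInf_le
    refine ⟨R, hR, hC, ?_⟩
    intro q
    have := hDp h
    simp only [Route.length, R, g, Nat.add_sub_cancel]
    rw [if_neg (by omega), two_mul, this]
    omega

/-- For every ROS-UET instance and every Hamiltonian cycle `H`
of its network, there is a feasible schedule with makespan at most
`2·c(H) + max {n, m}`. -/
theorem statement3 {V : Type*} [Fintype V] [DecidableEq V] {n m : ℕ}
    (N : Network V) (loc : Fin n → V) (hm : 0 < m)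
    (u : V) (H : N.G.Walk u u) (hH : H.IsHamiltonianCycle) :
    ∃ S : Fin n → Fin m → ℕ, Feasible N loc S ∧
      makespan N loc S ≤ 2 * walkWeight N.c H + max n m := by
  have hd : N.depot ∈ H.support := hH.mem_support _
  have hlen : 0 < H.length := by
    have := hH.isCycle.three_le_length
    omega
  obtain ⟨p, hp⟩ : ∃ p, p = H.rotate N.depot hd := ⟨_, rfl⟩
  have hrot : p.darts ~r H.darts := by
    rw [hp]; exact SimpleGraph.Walk.rotate_darts _ _ _
  have hww : walkWeight N.c p = walkWeight N.c H := by
    unfold walkWeight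
    exact (hrot.perm.map _).sum_eq
  have hpl : p.length = H.length := by
    have := hrot.perm.length_eq
    simpa using this
  have hsup : ∀ x, x ∈ p.support := by
    intro x
    rw [hp, SimpleGraph.Walk.mem_support_rotate_iff]
    exact hH.mem_support x
  have hmod : ∀ k, p.getVert ((k + 1) % p.length) = p.getVert (k % p.length + 1) := by
    intro k
    rw [← Nat.mod_add_mod]
    have hlt := Nat.mod_lt k (hpl ▸ hlen : p.length > 0)
    rcases Nat.lt_or_ge (k % p.length + 1) p.length with h | h
    · rw [Nat.mod_eq_of_lt h]
    · have : k % p.length + 1 = p.length := by omega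
      rw [this]; simp
  have := main_aux_s3 (m := m) N loc p.length (hpl ▸ hlen) (fun k => p.getVert (k % p.length))
    (by simp) (by simp)
    (by
      intro k
      simp only [hmod]
      exact p.adj_getVert_succ (Nat.mod_lt k (hpl ▸ hlen)))
    (by
      intro i
      obtain ⟨k, hk, hkl⟩ := SimpleGraph.Walk.mem_support_iff_exists_getVert.1 (hsup (loc i))
      rcases hkl.lt_or_eq with h | h
      · exact ⟨k, h, by simpa [Nat.mod_eq_of_lt h] using hk⟩
      · refine ⟨0, hpl ▸ hlen, ?_⟩
        subst h
        simpa using hk)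
  have hsum : (∑ j ∈ Finset.range p.length,
      N.c (p.getVert (j % p.length)) (p.getVert ((j + 1) % p.length))) = walkWeight N.c H := by
    rw [← hww, walkWeight_eq_sum]
    apply Finset.sum_congr rfl
    intro j hj
    rw [hmod, Nat.mod_eq_of_lt (Finset.mem_range.1 hj)]
  rw [← hsum]
  exact this
end

section
/- Let I be a ROS-UET instance on a network G=(V,E,c,v*) such that (V,E) is a complete graph, c satisfies the triangle inequality, and every vertex other than the depot contains at least one job. Let S be a feasible schedule for I of minimum makespan L, and let (R^q)_{q=1}^m be routes compatible with S, each of length at most L. Then for every machine M_q and every vertex v ∈ V, the total length of the stays of R^q in v satisfies Σ_{k : v_k = v} (b_k − a_k) ≤ n_v + m − 1, where n_v is the number of jobs located in v. -/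
/-- The arrival time of every stay of a route is the sum of previous stays and travels. -/
lemma route_arrival {V : Type*} (N : Network V) (R : Route V) (hR : IsRoute N R) :
    ∀ k, k < R.s → R.a k =
      ∑ l ∈ Finset.range k, ((R.b l - R.a l) + N.c (R.v l) (R.v (l + 1))) := by
  obtain ⟨h0, h1, h2, h3, h4, h5⟩ := hR
  intro k
  induction k with
  | zero => intro _; simpa using h3
  | succ k ih =>
    intro hk
    rw [Finset.sum_range_succ, ← ih (by omega), (h5 k hk).2]
    have := h4 k (by omega)
    omega

/-- From one route serving all jobs, we get a feasible schedule by removing idle time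
and delaying machine `r` by `r` time units. -/
lemma exists_schedule {V : Type*} {n m : ℕ} (N : Network V) (loc : Fin n → V)
    (R : Route V) (hR : IsRoute N R) (f : Fin n → ℕ) (hf : ∀ i, f i < R.s)
    (hloc : ∀ i, R.v (f i) = loc i) :
    ∃ S' : Fin n → Fin m → ℕ, Feasible N loc S' ∧ makespan N loc S' ≤
      (∑ l ∈ Finset.range (R.s - 1), N.c (R.v l) (R.v (l + 1))) + n + m - 1 := by
  classical
  obtain ⟨h0, h1, h2, h3, h4, h5⟩ := hR
  set w : ℕ → ℕ := fun k => (Finset.univ.filter (fun i : Fin n => f i = k)).card with hw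
  set A : ℕ → ℕ := fun k => ∑ l ∈ Finset.range k, (w l + N.c (R.v l) (R.v (l + 1))) with hA
  have hAsucc : ∀ k, A (k + 1) = A k + w k + N.c (R.v k) (R.v (k + 1)) := by
    intro k
    simp only [hA, Finset.sum_range_succ]
    omega
  have hAmono : Monotone A := monotone_nat_of_le_succ (fun k => by rw [hAsucc]; omega)
  set rk : Fin n → ℕ :=
    fun i => (Finset.univ.filter (fun j : Fin n => f j = f i ∧ j < i)).card with hrk
  have hrk_lt : ∀ i, rk i < w (f i) := by
    intro i
    apply Finset.card_lt_card
    rw [Finset.ssubset_iff_of_subset]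
    · exact ⟨i, by simp, by simp⟩
    · intro j hj
      simp only [Finset.mem_filter, Finset.mem_univ, true_and] at hj ⊢
      exact hj.1
  have hrk_mono : ∀ i j, f i = f j → i < j → rk i < rk j := by
    intro i j hij hlt
    apply Finset.card_lt_card
    rw [Finset.ssubset_iff_of_subset]
    · exact ⟨i, by simp [hij, hlt], by simp⟩
    · intro l hl
      simp only [Finset.mem_filter, Finset.mem_univ, true_and] at hl ⊢
      exact ⟨hl.1.trans hij, hl.2.trans hlt⟩
  have hstay : ∀ i j, f i < f j → A (f i) + rk i < A (f j) + rk j := by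
    intro i j hlt
    have e1 := hAmono (Nat.succ_le_of_lt hlt)
    have e2 := hAsucc (f i)
    have e3 := hrk_lt i
    simp only [Nat.succ_eq_add_one] at e1
    omega
  have hinj : ∀ i j, i ≠ j → A (f i) + rk i ≠ A (f j) + rk j := by
    intro i j hij
    rcases lt_trichotomy (f i) (f j) with h | h | h
    · exact (hstay i j h).ne
    · rcases lt_or_gt_of_ne hij with h' | h'
      · have := hrk_mono i j h h'
        rw [h]; omega
      · have := hrk_mono j i h.symm h'
        rw [h]; omega
    · exact (hstay j i h).ne'
  set R' : Fin m → Route V := fun r =>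
    { s := R.s
      a := fun k => if k = 0 then 0 else A k + r
      v := R.v
      b := fun k => A k + w k + r } with hR'
  have hroute : ∀ r, IsRoute N (R' r) := by
    intro r
    refine ⟨h0, h1, h2, by simp [hR'], ?_, ?_⟩
    · intro k _
      simp only [hR']
      split_ifs <;> omega
    · intro k hk
      refine ⟨(h5 k hk).1, ?_⟩
      have := hAsucc k
      simp only [hR', Nat.add_eq_zero_iff, one_ne_zero, and_false, if_false]
      omega
  have hcomp : Compatible loc (fun i (r : Fin m) => A (f i) + rk i + r) R' := by
    intro i r
    refine ⟨f i, hf i, hloc i, ?_, ?_⟩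
    · simp only [hR']
      split_ifs <;> omega
    · have := hrk_lt i
      simp only [hR']
      omega
  refine ⟨fun i r => A (f i) + rk i + r, ⟨?_, ?_, R', hroute, hcomp⟩, ?_⟩
  · intro i j q hij
    have := hinj i j hij
    simp only
    omega
  · intro i q r hqr
    have : (q : ℕ) ≠ r := fun h => hqr (Fin.ext h)
    simp only
    omega
  · apply Nat.sInf_le
    refine ⟨R', hroute, hcomp, ?_⟩
    intro r
    have hsum : ∑ l ∈ Finset.range R.s, w l = n := by
      have := Finset.card_eq_sum_card_fiberwise (f := f) (s := Finset.univ)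
        (t := Finset.range R.s) (fun i _ => by simpa using hf i)
      simpa [hw] using this.symm
    have hs : R.s = (R.s - 1) + 1 := by omega
    rw [hs, Finset.sum_range_succ] at hsum
    have hAe : A (R.s - 1) = ∑ l ∈ Finset.range (R.s - 1), w l +
        ∑ l ∈ Finset.range (R.s - 1), N.c (R.v l) (R.v (l + 1)) := by
      simp only [hA, Finset.sum_add_distrib]
    have := r.2
    simp only [Route.length, hR']
    omega

/-- For a ROS-UET instance on a complete network whose travel
times satisfy the triangle inequality and in which every non-depot vertex
contains at least one job: if `S` is a feasible schedule of minimum makespan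
`L` and `(R q)` are routes compatible with `S`, each of length at most `L`,
then for every machine `q` and vertex `v`, the total length of the stays of
`R q` in `v` is at most `n_v + m - 1`. -/
theorem statement5 {V : Type*} [Fintype V] [DecidableEq V] {n m : ℕ}
    (N : Network V)
    (hcomplete : N.G = ⊤)
    (htri : ∀ u v w : V, u ≠ v → v ≠ w → u ≠ w → N.c u w ≤ N.c u v + N.c v w)
    (loc : Fin n → V)
    (hjobs : ∀ v : V, v ≠ N.depot → ∃ i : Fin n, loc i = v)
    (S : Fin n → Fin m → ℕ) (L : ℕ)
    (hfeas : Feasible N loc S)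
    (hL : L = makespan N loc S)
    (hopt : ∀ S' : Fin n → Fin m → ℕ, Feasible N loc S' →
      makespan N loc S ≤ makespan N loc S')
    (R : Fin m → Route V)
    (hroutes : ∀ q, IsRoute N (R q))
    (hcompat : Compatible loc S R)
    (hlen : ∀ q, Route.length (R q) ≤ L) :
    ∀ (q : Fin m) (v : V),
      ∑ k ∈ (Finset.range (R q).s).filter (fun k => (R q).v k = v),
        ((R q).b k - (R q).a k) ≤
      (Finset.univ.filter (fun i : Fin n => loc i = v)).card + m - 1 := by
  intro q v
  choose f hf hfloc hfa hfb using fun i => hcompat i q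
  obtain ⟨S', hS', hm⟩ := exists_schedule (m := m) N loc (R q) (hroutes q) f hf hfloc
  have hLm := hopt S' hS'
  have hlq := hlen q
  have harr := route_arrival N (R q) (hroutes q) ((R q).s - 1)
    (by have := (hroutes q).1; omega)
  have hs0 := (hroutes q).1
  have hab := (hroutes q).2.2.2.2.1 ((R q).s - 1) (by omega)
  have hm0 := q.2
  rw [Finset.sum_add_distrib] at harr
  have hs : (R q).s = ((R q).s - 1) + 1 := by omega
  have htot : ∑ l ∈ Finset.range (R q).s, ((R q).b l - (R q).a l) ≤ n + m - 1 := by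
    rw [hs, Finset.sum_range_succ]
    simp only [Route.length] at hlq
    omega
  have hstay : ∀ k, (Finset.univ.filter (fun i : Fin n => f i = k)).card
      ≤ (R q).b k - (R q).a k := by
    intro k
    rw [← Nat.card_Ico]
    apply Finset.card_le_card_of_injOn (fun i => S i q)
    · intro i hi
      have hi' : f i = k := by simpa using hi
      subst hi'
      have e1 := hfa i
      have e2 := hfb i
      simp only [Finset.coe_Ico, Set.mem_Ico]
      omega
    · intro i _ j _ hij
      by_contra hne
      exact hfeas.1 i j q hne hij
  have hsplit := Finset.sum_filter_add_sum_filter_not (Finset.range (R q).s)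
    (fun k => (R q).v k = v) (fun k => (R q).b k - (R q).a k)
  have hother : (Finset.univ.filter (fun i : Fin n => ¬ loc i = v)).card ≤
      ∑ k ∈ (Finset.range (R q).s).filter (fun k => ¬ (R q).v k = v),
        ((R q).b k - (R q).a k) := by
    rw [Finset.card_eq_sum_card_fiberwise (f := f)
      (t := (Finset.range (R q).s).filter (fun k => ¬ (R q).v k = v))]
    · apply Finset.sum_le_sum
      intro k _
      refine le_trans (Finset.card_le_card ?_) (hstay k)
      intro i hi
      simp only [Finset.mem_filter, Finset.mem_univ, true_and] at hi ⊢
      exact hi.2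
    · intro i hi
      have hi' : ¬ loc i = v := by simpa using hi
      simp only [Finset.coe_filter, Finset.mem_range, Set.mem_setOf_eq]
      exact ⟨hf i, by rw [hfloc i]; exact hi'⟩
  have hcard := Finset.card_filter_add_card_filter_not (s := (Finset.univ : Finset (Fin n)))
    (fun i => loc i = v)
  rw [Finset.card_univ, Fintype.card_fin] at hcard
  omega
end

section
/- Let I be a ROS-UET instance on a network G=(V,E,c,v*) with g vertices and let (T,A,D) be a pre-schedule for I. Suppose there exists a feasible schedule S* for I that is compatible with some routes (R^{q*})_{q=1}^m complying with (T,A,D). Then for every collection of routes (R^q)_{q=1}^m complying with (T,A,D), there exists a critical schedule compatible with (R^q)_{q=1}^m. -/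
/-- A vertex is critical if it contains fewer than `m` jobs. -/
def Critical {V : Type*} [DecidableEq V] {n : ℕ} (m : ℕ) (loc : Fin n → V)
    (v : V) : Prop :=
  (Finset.univ.filter (fun i : Fin n => loc i = v)).card < m

/-- A pre-schedule `(T, A, D)`: a sequence of `s` pre-stays, the `k`-th
(for `k < s`) being `(q k, w k)`, together with a length assignment `A`
and a displacement `D`. -/
structure PreSchedule (V : Type*) (m : ℕ) where
  s : ℕ
  q : ℕ → Fin m
  w : ℕ → V
  A : ℕ → ℕ
  D : ℕ → ℕ

/-- Well-formedness of a pre-schedule: at most `m² + (2g-3)·m` pre-stays,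
`A` takes values in `{0,…,2m-1}` and `D` in `{0,…,2m}` on pre-stays in
critical vertices. -/
def IsPreSchedule {V : Type*} [Fintype V] [DecidableEq V] {n : ℕ} (m : ℕ)
    (loc : Fin n → V) (P : PreSchedule V m) : Prop :=
  P.s ≤ m ^ 2 + (2 * Fintype.card V - 3) * m ∧
  ∀ k < P.s, Critical m loc (P.w k) → P.A k < 2 * m ∧ P.D k ≤ 2 * m

/-- `sigma P k` is the (0-based) position of the `k`-th pre-stay among the
pre-stays of machine `q k` in the pre-stay sequence. -/
def sigma {V : Type*} {m : ℕ} (P : PreSchedule V m) (k : ℕ) : ℕ :=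
  ((Finset.range k).filter (fun j => P.q j = P.q k)).card

/-- Routes `(R q)` comply with the pre-schedule `P = (T, A, D)`. -/
def Comply {V : Type*} [DecidableEq V] {n : ℕ} (m : ℕ) (loc : Fin n → V)
    (P : PreSchedule V m) (R : Fin m → Route V) : Prop :=
  (∀ mq : Fin m, (R mq).s = ((Finset.range P.s).filter (fun j => P.q j = mq)).card) ∧
  (∀ k < P.s, (R (P.q k)).v (sigma P k) = P.w k) ∧
  (∀ k ℓ, k < ℓ → ℓ < P.s →
    (R (P.q k)).a (sigma P k) ≤ (R (P.q ℓ)).a (sigma P ℓ)) ∧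
  (∀ k < P.s, Critical m loc (P.w k) →
    (R (P.q k)).b (sigma P k) - (R (P.q k)).a (sigma P k) = P.A k) ∧
  (∀ k ℓ, k < ℓ → ℓ < P.s → Critical m loc (P.w k) → Critical m loc (P.w ℓ) →
    (∀ i, k < i → i < ℓ → ¬ Critical m loc (P.w i)) →
    (P.D ℓ = 2 * m →
      (R (P.q k)).a (sigma P k) + 2 * m ≤ (R (P.q ℓ)).a (sigma P ℓ)) ∧
    (P.D ℓ < 2 * m →
      (R (P.q ℓ)).a (sigma P ℓ) = (R (P.q k)).a (sigma P k) + P.D ℓ))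

/-- A critical schedule: start times for jobs in critical vertices such that
no machine processes two such jobs at once and no such job is processed by two
machines at once (values on jobs in non-critical vertices are irrelevant). -/
def IsCriticalSchedule {V : Type*} [DecidableEq V] {n m : ℕ} (loc : Fin n → V)
    (S' : Fin n → Fin m → ℕ) : Prop :=
  (∀ (i j : Fin n) (q : Fin m), i ≠ j →
    Critical m loc (loc i) → Critical m loc (loc j) → S' i q ≠ S' j q) ∧
  (∀ (i : Fin n) (q r : Fin m), q ≠ r →
    Critical m loc (loc i) → S' i q ≠ S' i r)

/-- A critical schedule is compatible with routes `(R q)`: each machine stays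
at the location of each job in a critical vertex while processing it. -/
def CriticalCompatible {V : Type*} [DecidableEq V] {n m : ℕ} (loc : Fin n → V)
    (S' : Fin n → Fin m → ℕ) (R : Fin m → Route V) : Prop :=
  ∀ (i : Fin n) (q : Fin m), Critical m loc (loc i) → ∃ k < (R q).s,
    (R q).v k = loc i ∧ (R q).a k ≤ S' i q ∧ S' i q + 1 ≤ (R q).b k

lemma exists_index {m : ℕ} (f : ℕ → Fin m) (mq : Fin m) (s t : ℕ)
    (h : t < ((Finset.range s).filter (fun j => f j = mq)).card) :
    ∃ k < s, f k = mq ∧ ((Finset.range k).filter (fun j => f j = mq)).card = t := by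
  induction s with
  | zero => simp at h
  | succ s ih =>
    by_cases h1 : t < ((Finset.range s).filter (fun j => f j = mq)).card
    · obtain ⟨k, hk, h2⟩ := ih h1
      exact ⟨k, by omega, h2⟩
    · rw [Finset.range_add_one, Finset.filter_insert] at h
      split_ifs at h with h2
      · rw [Finset.card_insert_of_notMem (by simp)] at h
        exact ⟨s, by omega, h2, by omega⟩
      · omega

lemma sigma_lt {V : Type*} {m : ℕ} (P : PreSchedule V m) {k l : ℕ} (h : k < l)
    (hq : P.q k = P.q l) : sigma P k < sigma P l := by
  unfold sigma
  apply Finset.card_lt_card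
  rw [Finset.ssubset_iff_of_subset]
  · exact ⟨k, by simp [h, hq], by simp⟩
  · intro j hj
    simp only [Finset.mem_filter, Finset.mem_range] at hj ⊢
    exact ⟨by omega, by rw [hj.2, hq]⟩

lemma sigma_lt_card {V : Type*} {m : ℕ} (P : PreSchedule V m) {k : ℕ} (h : k < P.s) :
    sigma P k < ((Finset.range P.s).filter (fun j => P.q j = P.q k)).card := by
  unfold sigma
  apply Finset.card_lt_card
  rw [Finset.ssubset_iff_of_subset]
  · exact ⟨k, by simp [h], by simp⟩
  · intro j hj
    simp only [Finset.mem_filter, Finset.mem_range] at hj ⊢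
    exact ⟨by omega, hj.2⟩

lemma route_le {V : Type*} {N : Network V} {R : Route V} (hR : IsRoute N R) {x y : ℕ}
    (h : x < y) (hy : y < R.s) : R.b x ≤ R.a y := by
  obtain ⟨_, _, _, _, hab, hs⟩ := hR
  induction y, h using Nat.le_induction with
  | base => have := (hs x hy).2; rw [Nat.succ_eq_add_one]; omega
  | succ y hxy ih =>
    have h1 := ih (by omega)
    have h2 := hab y (by omega)
    have h3 := (hs y hy).2
    omega

lemma shift_eq {V : Type*} [Fintype V] [DecidableEq V] {n m : ℕ} (loc : Fin n → V)
    (P : PreSchedule V m) (hP : IsPreSchedule m loc P) (R R' : Fin m → Route V)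
    (h : Comply m loc P R) (h' : Comply m loc P R') (k : ℕ)
    (hk : Critical m loc (P.w k)) (l : ℕ) : k < l → l < P.s → Critical m loc (P.w l) →
    (R (P.q k)).a (sigma P k) + 2 * m ≤ (R (P.q l)).a (sigma P l) ∨
    ((R (P.q l)).a (sigma P l) + (R' (P.q k)).a (sigma P k) =
      (R' (P.q l)).a (sigma P l) + (R (P.q k)).a (sigma P k)) := by
  induction l using Nat.strong_induction_on with
  | _ l ih =>
  intro hkl hl hcl
  classical
  obtain ⟨p, hp, hmax⟩ : ∃ p, (k ≤ p ∧ p < l ∧ Critical m loc (P.w p)) ∧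
      ∀ i, p < i → i < l → ¬ Critical m loc (P.w i) := by
    have hne : ((Finset.range l).filter
      (fun i => k ≤ i ∧ Critical m loc (P.w i))).Nonempty := ⟨k, by simp [hkl, hk]⟩
    obtain ⟨p, hp, hm⟩ := Finset.exists_max_image _ id hne
    simp only [Finset.mem_filter, Finset.mem_range, id] at hp hm
    refine ⟨p, ⟨hp.2.1, hp.1, hp.2.2⟩, fun i hi hil hc => ?_⟩
    have := hm i ⟨hil, by omega, hc⟩
    omega
  obtain ⟨hkp, hpl, hcp⟩ := hp
  have hD := (hP.2 l hl hcl).2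
  obtain ⟨d1, d2⟩ := h.2.2.2.2 p l hpl hl hcp hcl hmax
  obtain ⟨e1, e2⟩ := h'.2.2.2.2 p l hpl hl hcp hcl hmax
  have mono := h.2.2.1 p l hpl hl
  have hcase : P.D l = 2 * m ∨ P.D l < 2 * m := by omega
  rcases Nat.eq_or_lt_of_le hkp with rfl | hlt
  · rcases hcase with hc | hc
    · exact Or.inl (d1 hc)
    · have := d2 hc
      have := e2 hc
      omega
  · have mono2 := h.2.2.1 k p hlt (by omega)
    have hi := ih p hpl hlt (by omega) hcp
    rcases hcase with hc | hc
    · have := d1 hc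
      omega
    · have := d2 hc
      have := e2 hc
      omega

/-- If some feasible schedule `S*` is compatible with some
routes `(R* q)` complying with a pre-schedule `(T, A, D)`, then for *every*
collection of routes `(R q)` complying with `(T, A, D)` there is a critical
schedule compatible with `(R q)`. -/
theorem statement7 {V : Type*} [Fintype V] [DecidableEq V] {n m : ℕ}
    (N : Network V) (loc : Fin n → V)
    (P : PreSchedule V m) (hP : IsPreSchedule m loc P)
    (Sstar : Fin n → Fin m → ℕ) (Rstar : Fin m → Route V)
    (hfeas : Feasible N loc Sstar)
    (hRstar : ∀ q, IsRoute N (Rstar q))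
    (hcomplyStar : Comply m loc P Rstar)
    (hcompatStar : Compatible loc Sstar Rstar) :
    ∀ R : Fin m → Route V, (∀ q, IsRoute N (R q)) → Comply m loc P R →
      ∃ S' : Fin n → Fin m → ℕ,
        IsCriticalSchedule loc S' ∧ CriticalCompatible loc S' R := by
  intro R hR hcomply
  have hex : ∀ (i : Fin n) (q : Fin m), ∃ k < P.s, P.q k = q ∧ P.w k = loc i ∧
      (Rstar q).a (sigma P k) ≤ Sstar i q ∧ Sstar i q + 1 ≤ (Rstar q).b (sigma P k) := by
    intro i q
    obtain ⟨t, ht, hv, ha, hb⟩ := hcompatStar i q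
    rw [hcomplyStar.1 q] at ht
    obtain ⟨k, hk, hq, hs⟩ := exists_index P.q q P.s t ht
    have hs' : sigma P k = t := by unfold sigma; rw [hq]; exact hs
    have hw := hcomplyStar.2.1 k hk
    rw [hq, hs'] at hw
    refine ⟨k, hk, hq, by rw [← hw, hv], ?_, ?_⟩ <;> rw [hs'] <;> assumption
  choose K hK hKq hKw hKa hKb using hex
  have hsig : ∀ i q, sigma P (K i q) < (R q).s := by
    intro i q
    have := sigma_lt_card P (hK i q)
    rw [hcomply.1 q]
    simpa only [hKq] using this
  -- the end of the shifted operation lies in the stay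
  have hend : ∀ i q, Critical m loc (loc i) →
      Sstar i q - (Rstar q).a (sigma P (K i q)) + (R q).a (sigma P (K i q)) + 1 ≤
        (R q).b (sigma P (K i q)) ∧
      Sstar i q - (Rstar q).a (sigma P (K i q)) + 1 < 2 * m := by
    intro i q hc
    have hc' : Critical m loc (P.w (K i q)) := by rw [hKw]; exact hc
    have h1 := hcomply.2.2.2.1 _ (hK i q) hc'
    have h2 := hcomplyStar.2.2.2.1 _ (hK i q) hc'
    have h3 := (hP.2 _ (hK i q) hc').1
    rw [hKq] at h1 h2
    have h4 := (hR q).2.2.2.2.1 _ (hsig i q)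
    have h5 := hKa i q
    have h6 := hKb i q
    omega
  refine ⟨fun i q => Sstar i q - (Rstar q).a (sigma P (K i q)) +
    (R q).a (sigma P (K i q)), ⟨?_, ?_⟩, ?_⟩
  · intro i j q hij hci hcj heq
    dsimp only at heq
    have hi := hend i q hci
    have hj := hend j q hcj
    have hne := hfeas.1 i j q hij
    have h1 := hKa i q
    have h2 := hKa j q
    rcases lt_trichotomy (K i q) (K j q) with hlt | he | hlt
    · have := route_le (hR q) (sigma_lt P hlt (by rw [hKq, hKq])) (hsig j q)
      omega
    · rw [he] at heq h1
      omega
    · have := route_le (hR q) (sigma_lt P hlt (by rw [hKq, hKq])) (hsig i q)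
      omega
  · intro i q r hqr hc heq
    dsimp only at heq
    have hne := hfeas.2.1 i q r hqr
    have hcK : ∀ q, Critical m loc (P.w (K i q)) := fun q => by rw [hKw]; exact hc
    have main : ∀ q r, K i q < K i r → Sstar i q ≠ Sstar i r →
        Sstar i q - (Rstar q).a (sigma P (K i q)) + (R q).a (sigma P (K i q)) ≠
        Sstar i r - (Rstar r).a (sigma P (K i r)) + (R r).a (sigma P (K i r)) := by
      intro q r hlt hne
      have hs := shift_eq loc P hP R Rstar hcomply hcomplyStar _ (hcK q) _ hlt
        (hK i r) (hcK r)
      rw [hKq, hKq] at hs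
      have h1 := hend i q hc
      have h2 := hKa i q
      have h3 := hKa i r
      omega
    rcases lt_trichotomy (K i q) (K i r) with hlt | he | hlt
    · exact main q r hlt hne heq
    · exact hqr (by rw [← hKq i q, he, hKq])
    · exact main r q hlt hne.symm heq.symm
  · intro i q hc
    refine ⟨sigma P (K i q), hsig i q, ?_, Nat.le_add_left _ _, (hend i q hc).1⟩
    have := hcomply.2.1 _ (hK i q)
    rw [hKq, hKw] at this
    exact this
end

section
/- Let I be a ROS-UET instance on a network G=(V,E,c,v*) with g vertices, let (T,A,D) be a pre-schedule for I, let (R^q)_{q=1}^m be routes complying with (T,A,D) such that each route R^q stays in each vertex v ∈ V for at least n_v time in total, and let S' be a critical schedule compatible with (R^q)_{q=1}^m. Then S' can be extended to a feasible schedule S compatible with (R^q)_{q=1}^m, i.e., there is a feasible schedule S compatible with (R^q)_{q=1}^m such that S(J_i,M_q) = S'(J_i,M_q) for every job J_i located in a critical vertex and every machine M_q. -/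
theorem exists_perm_of_regular {ι : Type*} [Fintype ι] [DecidableEq ι] (A : ι → ι → ℕ) (d : ℕ)
    (hd : 0 < d) (hr : ∀ i, ∑ j, A i j = d) (hc : ∀ j, ∑ i, A i j = d) :
    ∃ σ : Equiv.Perm ι, ∀ i, A i (σ i) ≠ 0 := by
  have hd' : (d : ℚ) ≠ 0 := by positivity
  have hM : (Matrix.of fun i j => (A i j : ℚ) / d) ∈ doublyStochastic ℚ ι := by
    rw [mem_doublyStochastic_iff_sum]
    refine ⟨fun i j => by simp only [Matrix.of_apply]; positivity, fun i => ?_, fun j => ?_⟩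
    · simp only [Matrix.of_apply]
      rw [← Finset.sum_div, ← Nat.cast_sum, hr, div_self hd']
    · simp only [Matrix.of_apply]
      rw [← Finset.sum_div, ← Nat.cast_sum, hc, div_self hd']
  obtain ⟨w, hw, hw1, hwM⟩ := exists_eq_sum_perm_of_mem_doublyStochastic hM
  have : ∃ σ, w σ ≠ 0 := by
    by_contra! h
    simp [h] at hw1
  obtain ⟨σ, hσ⟩ := this
  refine ⟨σ, fun i h0 => ?_⟩
  have h := congrFun (congrFun hwM i) (σ i)
  simp only [Matrix.of_apply, h0, Nat.cast_zero, zero_div, Matrix.sum_apply,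
    Matrix.smul_apply, smul_eq_mul] at h
  rw [Finset.sum_eq_zero_iff_of_nonneg] at h
  · have := h σ (Finset.mem_univ _)
    simp [Equiv.Perm.permMatrix, PEquiv.toMatrix_apply, hσ] at this
  · intro τ _
    apply mul_nonneg (hw τ)
    simp only [Equiv.Perm.permMatrix, PEquiv.toMatrix_apply]
    split_ifs <;> simp

/-- A matching saturating all left vertices and all right vertices of maximum degree. -/
theorem exists_good_matching {M U : Type*} [Fintype M] [DecidableEq M] [Fintype U] [DecidableEq U]
    (T : M → Finset U) (d : ℕ) (hd : 0 < d) (hT : ∀ q, (T q).card = d)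
    (hU : ∀ t, (Finset.univ.filter fun q => t ∈ T q).card ≤ d) :
    ∃ f : M → U, (∀ q, f q ∈ T q) ∧ Function.Injective f ∧
      ∀ t, (Finset.univ.filter fun q => t ∈ T q).card = d → ∃ q, f q = t := by
  let A : M ⊕ U → M ⊕ U → ℕ := fun x y => match x, y with
    | .inl _, .inl _ => 0
    | .inl q, .inr t => if t ∈ T q then 1 else 0
    | .inr t, .inl q => if t ∈ T q then 1 else 0
    | .inr t, .inr t' => if t = t' then d - (Finset.univ.filter fun q => t ∈ T q).card else 0
  have hsymm : ∀ x y, A x y = A y x := by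
    rintro (q | t) (q' | t') <;> simp only [A]
    by_cases h : t = t'
    · subst h; rfl
    · simp [h, Ne.symm h]
  have hrow : ∀ x, ∑ y, A x y = d := by
    rintro (q | t)
    · rw [Fintype.sum_sum_type]
      simp [A, hT]
    · rw [Fintype.sum_sum_type]
      have := hU t
      simp only [A, Finset.sum_ite_eq, Finset.mem_univ, if_true, ← Finset.card_filter]
      omega
  obtain ⟨σ, hσ⟩ := exists_perm_of_regular A d hd hrow (fun j => by
    rw [← hrow j]; exact Finset.sum_congr rfl fun i _ => hsymm _ _)
  have h1 : ∀ q, ∃ t, σ (.inl q) = .inr t ∧ t ∈ T q := by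
    intro q
    have := hσ (.inl q)
    rcases h : σ (.inl q) with q' | t
    · rw [h] at this; simp [A] at this
    · rw [h] at this; exact ⟨t, rfl, by simpa [A] using this⟩
  choose f hf hfT using h1
  refine ⟨f, hfT, ?_, ?_⟩
  · intro q r h
    have : σ (.inl q) = σ (.inl r) := by rw [hf, hf, h]
    simpa using this
  · intro t ht
    rcases h : σ.symm (.inr t) with q | t'
    · refine ⟨q, ?_⟩
      have h' := hf q
      rw [← h] at h'
      simpa using h'.symm
    · exfalso
      have h2 := hσ (.inr t')
      rw [← h, Equiv.apply_symm_apply, h] at h2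
      simp only [A] at h2
      split_ifs at h2 with h3
      · subst h3; omega
      · exact h2 rfl

/-- Koenig style edge colouring. -/
theorem exists_edge_colouring {M U : Type*} [Fintype M] [DecidableEq M] [Fintype U]
    [DecidableEq U] (d : ℕ) : ∀ (T : M → Finset U), (∀ q, (T q).card = d) →
    (∀ t, (Finset.univ.filter fun q => t ∈ T q).card ≤ d) →
    ∃ f : Fin d → M → U, (∀ j q, f j q ∈ T q) ∧ (∀ q j j', f j q = f j' q → j = j') ∧
      ∀ j q r, f j q = f j r → q = r := by
  induction d with
  | zero =>
    intro T _ _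
    exact ⟨fun j => j.elim0, fun j => j.elim0, fun _ j => j.elim0, fun j => j.elim0⟩
  | succ d ih =>
    intro T hT hU
    obtain ⟨g, hgT, hginj, hgmax⟩ := exists_good_matching T (d + 1) (Nat.succ_pos d) hT hU
    obtain ⟨f, hfT, hf1, hf2⟩ := ih (fun q => (T q).erase (g q))
      (fun q => by rw [Finset.card_erase_of_mem (hgT q), hT]; rfl) (by
        intro t
        by_cases h : (Finset.univ.filter fun q => t ∈ T q).card = d + 1
        · obtain ⟨q, rfl⟩ := hgmax t h
          have : (Finset.univ.filter fun r => g q ∈ (T r).erase (g r)) ⊆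
              (Finset.univ.filter fun r => g q ∈ T r).erase q := by
            intro r hr
            simp only [Finset.mem_filter, Finset.mem_univ, true_and, Finset.mem_erase] at hr ⊢
            exact ⟨fun e => hr.1 (by rw [e]), hr.2⟩
          have h2 := Finset.card_le_card this
          rw [Finset.card_erase_of_mem (by simp [hgT]), h] at h2
          exact h2
        · have : (Finset.univ.filter fun r => t ∈ (T r).erase (g r)) ⊆
              (Finset.univ.filter fun r => t ∈ T r) := by
            intro r hr
            simp only [Finset.mem_filter, Finset.mem_univ, true_and, Finset.mem_erase] at hr ⊢
            exact hr.2
          have h2 := Finset.card_le_card this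
          have h3 := hU t
          omega)
    refine ⟨Fin.cons g f, ?_, ?_, ?_⟩
    · intro j q
      refine Fin.cases ?_ (fun j => ?_) j
      · exact hgT q
      · exact Finset.mem_of_mem_erase (hfT j q)
    · intro q j j'
      have hne : ∀ j, f j q ≠ g q := fun j => Finset.ne_of_mem_erase (hfT j q)
      refine Fin.cases ?_ (fun j => ?_) j <;> refine Fin.cases ?_ (fun j' => ?_) j'
      · simp
      · intro h; exact absurd h.symm (hne j')
      · intro h; exact absurd h (hne j)
      · intro h; exact congrArg Fin.succ (hf1 q j j' h)
    · intro j
      refine Fin.cases ?_ (fun j => ?_) j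
      · intro q r h; exact hginj h
      · exact hf2 j

theorem route_lt {V : Type*} {N : Network V} {R : Route V} (hR : IsRoute N R) (k l : ℕ)
    (hkl : k < l) (hl : l < R.s) : R.b k ≤ R.a l := by
  obtain ⟨_, _, _, _, hab, hnext⟩ := hR
  induction l, hkl using Nat.le_induction with
  | base => rw [(hnext k hl).2]; omega
  | succ l hkl ih =>
    have h1 := ih (by omega)
    have h2 := hab l (by omega)
    have h3 := (hnext l hl).2
    omega

theorem route_unique {V : Type*} {N : Network V} {R : Route V} (hR : IsRoute N R) {k l x : ℕ}
    (hk : k < R.s) (hl : l < R.s) (h1 : R.a k ≤ x) (h2 : x + 1 ≤ R.b k)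
    (h3 : R.a l ≤ x) (h4 : x + 1 ≤ R.b l) : k = l := by
  rcases lt_trichotomy k l with h | h | h
  · have := route_lt hR k l h hl; omega
  · exact h
  · have := route_lt hR l k h hk; omega

/-- Scheduling of all jobs in one non-critical vertex. -/
theorem schedule_vertex {V : Type*} [DecidableEq V] {n m : ℕ} (N : Network V) (loc : Fin n → V)
    (R : Fin m → Route V) (hR : ∀ q, IsRoute N (R q)) (v : V)
    (hstay : ∀ (q : Fin m),
      (Finset.univ.filter (fun i : Fin n => loc i = v)).card ≤
        ∑ k ∈ (Finset.range (R q).s).filter (fun k => (R q).v k = v),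
          ((R q).b k - (R q).a k))
    (hv : ¬ Critical m loc v) :
    ∃ F : Fin n → Fin m → ℕ,
      (∀ i q, loc i = v → ∃ k < (R q).s, (R q).v k = v ∧ (R q).a k ≤ F i q ∧
        F i q + 1 ≤ (R q).b k) ∧
      (∀ i j q, loc i = v → loc j = v → i ≠ j → F i q ≠ F j q) ∧
      (∀ i q r, loc i = v → q ≠ r → F i q ≠ F i r) := by
  classical
  set J := Finset.univ.filter (fun i : Fin n => loc i = v) with hJ
  have hex : ∀ q, ∃ T : Finset ℕ, T.card = J.card ∧ ∀ x ∈ T, ∃ k < (R q).s, (R q).v k = v ∧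
      (R q).a k ≤ x ∧ x + 1 ≤ (R q).b k := by
    intro q
    have hcard : J.card ≤ (((Finset.range (R q).s).filter (fun k => (R q).v k = v)).biUnion
        fun k => Finset.Ico ((R q).a k) ((R q).b k)).card := by
      rw [Finset.card_biUnion]
      · simpa using hstay q
      · intro k hk l hl hne
        simp only [Finset.coe_filter, Finset.mem_range, Set.mem_ofPred_eq] at hk hl
        rw [Function.onFun, Finset.disjoint_left]
        intro x hx hx'
        rw [Finset.mem_Ico] at hx hx'
        exact hne (route_unique (hR q) hk.1 hl.1 hx.1 hx.2 hx'.1 hx'.2)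
    obtain ⟨T, hT, hTc⟩ := Finset.exists_subset_card_eq hcard
    refine ⟨T, hTc, fun x hx => ?_⟩
    have := hT hx
    simp only [Finset.mem_biUnion, Finset.mem_filter, Finset.mem_range, Finset.mem_Ico] at this
    obtain ⟨k, ⟨hk, hkv⟩, h1, h2⟩ := this
    exact ⟨k, hk, hkv, h1, h2⟩
  choose T hTc hT using hex
  let U : Finset ℕ := Finset.univ.biUnion T
  have hTU : ∀ q, T q ⊆ U := fun q => Finset.subset_biUnion_of_mem T (Finset.mem_univ q)
  obtain ⟨f, hf, hf1, hf2⟩ := exists_edge_colouring (M := Fin m) (U := U) J.card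
    (fun q => (T q).subtype (· ∈ U))
    (fun q => by
      rw [Finset.card_subtype, Finset.filter_true_of_mem (fun x hx => hTU q hx), hTc])
    (fun t => by
      refine (Finset.card_le_univ _).trans ?_
      rw [Fintype.card_fin]
      exact not_lt.mp hv)
  have hmem : ∀ i, loc i = v → i ∈ J := fun i hi => by simp [hJ, hi]
  refine ⟨fun i q => if h : i ∈ J then (f (J.equivFin ⟨i, h⟩) q : ℕ) else 0, ?_, ?_, ?_⟩
  · intro i q hi
    simp only [dif_pos (hmem i hi)]
    exact hT q _ (by simpa using hf (J.equivFin ⟨i, hmem i hi⟩) q)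
  · intro i j q hi hj hne h
    simp only [dif_pos (hmem i hi), dif_pos (hmem j hj)] at h
    have := hf1 q _ _ (Subtype.ext h)
    simp at this
    exact hne this
  · intro i q r hi hne h
    simp only [dif_pos (hmem i hi)] at h
    exact hne (hf2 _ _ _ (Subtype.ext h))

/-- If routes `(R q)` comply with a pre-schedule `(T, A, D)`
and each route stays in each vertex `v` for at least `n_v` time in total, then
any critical schedule `S'` compatible with `(R q)` can be extended to a
feasible schedule `S` compatible with `(R q)` that agrees with `S'` on all
jobs located in critical vertices. -/
theorem statement8 {V : Type*} [Fintype V] [DecidableEq V] {n m : ℕ}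
    (N : Network V) (loc : Fin n → V)
    (P : PreSchedule V m) (hP : IsPreSchedule m loc P)
    (R : Fin m → Route V)
    (hR : ∀ q, IsRoute N (R q))
    (hcomply : Comply m loc P R)
    (hstay : ∀ (q : Fin m) (v : V),
      (Finset.univ.filter (fun i : Fin n => loc i = v)).card ≤
        ∑ k ∈ (Finset.range (R q).s).filter (fun k => (R q).v k = v),
          ((R q).b k - (R q).a k))
    (S' : Fin n → Fin m → ℕ)
    (hS' : IsCriticalSchedule loc S')
    (hS'compat : CriticalCompatible loc S' R) :
    ∃ S : Fin n → Fin m → ℕ, Feasible N loc S ∧ Compatible loc S R ∧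
      ∀ (i : Fin n) (q : Fin m), Critical m loc (loc i) → S i q = S' i q := by
  classical
  have hF := fun v (hv : ¬ Critical m loc v) =>
    schedule_vertex N loc R hR v (fun q => hstay q v) hv
  choose F hF1 hF2 hF3 using hF
  let S : Fin n → Fin m → ℕ := fun i q =>
    if h : Critical m loc (loc i) then S' i q else F (loc i) h i q
  have hSc : ∀ i q, Critical m loc (loc i) → S i q = S' i q := fun i q h => dif_pos h
  have hSn : ∀ i q v (h : ¬ Critical m loc v), loc i = v → S i q = F v h i q := by
    rintro i q v h rfl
    exact dif_neg h
  have hcompat : Compatible loc S R := by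
    intro i q
    by_cases h : Critical m loc (loc i)
    · rw [hSc i q h]; exact hS'compat i q h
    · rw [hSn i q _ h rfl]; exact hF1 _ h i q rfl
  refine ⟨S, ⟨?_, ?_, R, hR, hcompat⟩, hcompat, hSc⟩
  · intro i j q hne heq
    obtain ⟨k, hk, hkv, h1, h2⟩ := hcompat i q
    obtain ⟨l, hl, hlv, h3, h4⟩ := hcompat j q
    rw [← heq] at h3 h4
    have hkl := route_unique (hR q) hk hl h1 h2 h3 h4
    subst hkl
    have hloc : loc j = loc i := by rw [← hkv, hlv]
    by_cases h : Critical m loc (loc i)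
    · have h' : Critical m loc (loc j) := by rw [hloc]; exact h
      rw [hSc i q h, hSc j q h'] at heq
      exact hS'.1 i j q hne h h' heq
    · rw [hSn i q _ h rfl, hSn j q _ h hloc] at heq
      exact hF2 _ h i j q rfl hloc hne heq
  · intro i q r hne heq
    by_cases h : Critical m loc (loc i)
    · rw [hSc i q h, hSc i r h] at heq
      exact hS'.2 i q r hne h heq
    · rw [hSn i q _ h rfl, hSn i r _ h rfl] at heq
      exact hF3 _ h i q r rfl hne heq
end

section
/- Let G be a connected simple graph on n vertices with positive integer edge weights c, let W be the minimum weight of a closed walk in G containing all vertices of G, and let T be a closed walk in G of length 2n − 2 + k (for some k ∈ ℕ) containing all vertices of G. Then the weight of T is at least W + k. -/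
open Classical in
/-- Parity vector of an edge. -/
noncomputable def parVec {V : Type*} : Sym2 V → (V → ZMod 2) :=
  Sym2.lift ⟨fun x y => Pi.single x 1 + Pi.single y 1, fun _ _ => add_comm _ _⟩

open Classical in
theorem parVec_mk {V : Type*} (x y : V) :
    parVec s(x, y) = Pi.single x 1 + Pi.single y 1 := rfl

theorem parAdd_self {V : Type*} (f : V → ZMod 2) : f + f = 0 := by
  funext v
  exact CharTwo.add_self_eq_zero (f v)

open Classical in
theorem walk_par {V : Type*} {G : SimpleGraph V} {u w : V} (p : G.Walk u w) :
    (Multiset.map parVec (p.edges : Multiset (Sym2 V))).sum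
      = Pi.single u 1 + Pi.single w 1 := by
  induction p with
  | nil => simp [parAdd_self]
  | @cons a b d h p ih =>
    rw [SimpleGraph.Walk.edges_cons, ← Multiset.cons_coe, Multiset.map_cons, Multiset.sum_cons, ih,
      parVec_mk]
    have := parAdd_self (Pi.single b (1 : ZMod 2))
    calc _ = Pi.single a 1 + Pi.single d 1 + (Pi.single b (1 : ZMod 2) + Pi.single b 1) := by abel
      _ = _ := by rw [this, add_zero]

open Classical in
theorem exists_walk_of_par {V : Type*} {G : SimpleGraph V} (n : ℕ) :
    ∀ (N : Multiset (Sym2 V)) (y x : V), N.card = n → (∀ e ∈ N, e ∈ G.edgeSet) →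
    (N.map parVec).sum = Pi.single y 1 + Pi.single x 1 →
    ∃ q : G.Walk y x, (q.edges : Multiset (Sym2 V)) ≤ N := by
  induction n with
  | zero =>
    intro N y x hN hG hs
    by_cases hyx : y = x
    · subst hyx
      exact ⟨SimpleGraph.Walk.nil, by simp⟩
    · exfalso
      rw [Multiset.card_eq_zero] at hN
      subst hN
      have := congrFun hs y
      simp [Pi.single_apply, hyx] at this
  | succ n ih =>
    intro N y x hN hG hs
    by_cases hyx : y = x
    · subst hyx
      exact ⟨SimpleGraph.Walk.nil, by simp⟩
    · have hex : ∃ e ∈ N, y ∈ e := by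
        by_contra hcon
        push Not at hcon
        have h0 : ((N.map parVec).map (fun f : V → ZMod 2 => f y)).sum = 0 := by
          apply Multiset.sum_eq_zero
          intro a ha
          simp only [Multiset.mem_map] at ha
          obtain ⟨f, ⟨e, he, rfl⟩, rfl⟩ := ha
          have := hcon e he
          induction e using Sym2.ind with
          | _ a b =>
            rw [Sym2.mem_iff, not_or] at this
            simp [parVec_mk, Pi.single_apply, this.1, this.2]
        have h1 := map_multiset_sum (Pi.evalAddMonoidHom (fun _ : V => ZMod 2) y) (N.map parVec)
        have h2 : (Pi.evalAddMonoidHom (fun _ : V => ZMod 2) y) (N.map parVec).sum = 1 := by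
          rw [hs]; simp [Pi.single_apply, hyx]
        rw [h2] at h1
        have h3 : (1 : ZMod 2) = 0 := h1.trans h0
        exact one_ne_zero h3
      obtain ⟨e, he, hye⟩ := hex
      obtain ⟨z, rfl⟩ := Sym2.mem_iff_exists.mp hye
      have hadj : G.Adj y z := hG _ he
      obtain ⟨N', rfl⟩ := Multiset.exists_cons_of_mem he
      have hs' : (N'.map parVec).sum = Pi.single z 1 + Pi.single x 1 := by
        rw [Multiset.map_cons, Multiset.sum_cons, parVec_mk] at hs
        have h := congrArg (fun f => Pi.single z (1 : ZMod 2) + Pi.single y 1 + f) hs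
        have e1 := parAdd_self (Pi.single y (1 : ZMod 2))
        have e2 := parAdd_self (Pi.single z (1 : ZMod 2))
        calc (N'.map parVec).sum = (Pi.single y (1 : ZMod 2) + Pi.single y 1)
              + (Pi.single z (1 : ZMod 2) + Pi.single z 1) + (N'.map parVec).sum := by
                rw [e1, e2]; simp
          _ = Pi.single z (1 : ZMod 2) + Pi.single y 1 + (Pi.single y 1 + Pi.single x 1) := by
                rw [← h]; abel
          _ = (Pi.single y (1 : ZMod 2) + Pi.single y 1) + (Pi.single z 1 + Pi.single x 1) := by
                abel
          _ = _ := by rw [e1, zero_add]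
      obtain ⟨q, hq⟩ := ih N' z x (by simpa using hN)
        (fun e he => hG e (Multiset.mem_cons_of_mem he)) hs'
      refine ⟨SimpleGraph.Walk.cons hadj q, ?_⟩
      rw [SimpleGraph.Walk.edges_cons, ← Multiset.cons_coe]
      exact Multiset.cons_le_cons _ hq

open Classical in
theorem exists_closed_of_par {V : Type*} {G : SimpleGraph V}
    (N : Multiset (Sym2 V)) (x y : V) (hG : ∀ e ∈ N, e ∈ G.edgeSet)
    (hs : (N.map parVec).sum = 0) (he : s(x, y) ∈ N) :
    ∃ q : G.Walk x x, (q.edges : Multiset (Sym2 V)) ≤ N ∧ 0 < q.length := by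
  have hadj : G.Adj x y := hG _ he
  obtain ⟨N', rfl⟩ := Multiset.exists_cons_of_mem he
  have hs' : (N'.map parVec).sum = Pi.single y 1 + Pi.single x 1 := by
    rw [Multiset.map_cons, Multiset.sum_cons, parVec_mk] at hs
    have e1 := parAdd_self (N'.map parVec).sum
    have := eq_neg_of_add_eq_zero_left hs
    rw [← eq_neg_of_add_eq_zero_left e1] at this
    rw [← this, add_comm]
  obtain ⟨q, hq⟩ := exists_walk_of_par _ N' y x rfl
    (fun e he => hG e (Multiset.mem_cons_of_mem he)) hs'
  refine ⟨SimpleGraph.Walk.cons hadj q, ?_, by simp⟩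
  rw [SimpleGraph.Walk.edges_cons, ← Multiset.cons_coe]
  exact Multiset.cons_le_cons _ hq

open Classical in
theorem exists_spanning_closed {V : Type*} {G : SimpleGraph V}
    (M : Multiset (Sym2 V)) (hG : ∀ e ∈ M, e ∈ G.edgeSet)
    (hs : (M.map parVec).sum = 0)
    (hc : (SimpleGraph.fromEdgeSet {e | e ∈ M}).Connected) (u : V) (n : ℕ) :
    ∀ p : G.Walk u u, (p.edges : Multiset (Sym2 V)) ≤ M → M.card - p.length ≤ n →
    ∃ p : G.Walk u u, (p.edges : Multiset (Sym2 V)) ≤ M ∧ ∀ v, v ∈ p.support := by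
  induction n with
  | zero =>
    intro p hp hn
    refine ⟨p, hp, ?_⟩
    have heq : (p.edges : Multiset (Sym2 V)) = M := by
      apply Multiset.eq_of_le_of_card_le hp
      simp only [Multiset.coe_card, SimpleGraph.Walk.length_edges]
      omega
    by_contra hcon
    push Not at hcon
    obtain ⟨v, hv⟩ := hcon
    obtain ⟨w⟩ := hc.preconnected u v
    obtain ⟨d, hd, h1, h2⟩ := w.exists_boundary_dart {v | v ∈ p.support} (by simp) hv
    have := ((SimpleGraph.fromEdgeSet_adj _).1 d.adj).1
    simp only [Set.mem_ofPred_eq] at this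
    have h3 := Multiset.mem_coe.1 (Multiset.mem_of_le heq.symm.le this)
    exact h2 (p.snd_mem_support_of_mem_edges h3)
  | succ n ih =>
    intro p hp hn
    by_cases hall : ∀ v, v ∈ p.support
    · exact ⟨p, hp, hall⟩
    push Not at hall
    obtain ⟨v, hv⟩ := hall
    obtain ⟨w⟩ := hc.preconnected u v
    obtain ⟨d, hd, h1, h2⟩ := w.exists_boundary_dart {v | v ∈ p.support} (by simp) hv
    have hm := ((SimpleGraph.fromEdgeSet_adj _).1 d.adj).1
    simp only [Set.mem_ofPred_eq] at hm h1
    obtain ⟨N, rfl⟩ := Multiset.le_iff_exists_add.1 hp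
    have hmN : s(d.fst, d.snd) ∈ N := by
      rcases Multiset.mem_add.1 hm with h | h
      · exact absurd (p.snd_mem_support_of_mem_edges (Multiset.mem_coe.1 h)) h2
      · exact h
    have hsN : (N.map parVec).sum = 0 := by
      rw [Multiset.map_add, Multiset.sum_add, walk_par, parAdd_self, zero_add] at hs
      exact hs
    obtain ⟨q, hq, hq0⟩ := exists_closed_of_par N _ _
      (fun e he => hG e (Multiset.mem_add.2 (Or.inr he))) hsN hmN
    have hlen : p.length = (p.takeUntil _ h1).length + (p.dropUntil _ h1).length := by
      rw [← SimpleGraph.Walk.length_append, SimpleGraph.Walk.take_spec]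
    have hedges : (p.edges : Multiset (Sym2 V)) =
        ((p.takeUntil _ h1).edges : Multiset (Sym2 V)) + ((p.dropUntil _ h1).edges) := by
      rw [Multiset.coe_add, ← SimpleGraph.Walk.edges_append, SimpleGraph.Walk.take_spec]
    refine ih (((p.takeUntil _ h1).append q).append (p.dropUntil _ h1)) ?_ ?_
    · rw [SimpleGraph.Walk.edges_append, SimpleGraph.Walk.edges_append,
        ← Multiset.coe_add, ← Multiset.coe_add, add_right_comm, ← hedges]
      exact add_le_add le_rfl hq
    · simp only [SimpleGraph.Walk.length_append]
      omega

open Classical in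
theorem exists_even_sub {V : Type*} [Fintype V] [Nonempty V] (R : Multiset (Sym2 V))
    (hR : Fintype.card V - 1 < R.card) :
    ∃ C ≤ R, C ≠ 0 ∧ (C.map parVec).sum = 0 := by
  obtain ⟨r⟩ := ‹Nonempty V›
  let f : R.ToType → ({v : V // v ≠ r} → ZMod 2) := fun i v => parVec (i : Sym2 V) v
  have hli : ¬ LinearIndependent (ZMod 2) f := by
    intro h
    have := h.fintype_card_le_finrank
    rw [Module.finrank_fintype_fun_eq_card, Multiset.card_coe] at this
    have h2 : Fintype.card {v : V // v ≠ r} = Fintype.card V - 1 := by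
      simp [Fintype.card_subtype_compl]
    omega
  rw [Fintype.not_linearIndependent_iff] at hli
  obtain ⟨g, hg, i, hi⟩ := hli
  let S : Finset R.ToType := Finset.univ.filter (fun i => g i ≠ 0)
  refine ⟨S.val.map (fun x : R.ToType => (x : Sym2 V)), ?_, ?_, ?_⟩
  · conv_rhs => rw [← Multiset.map_univ_coe R]
    exact Multiset.map_le_map (Finset.val_le_iff.2 (Finset.filter_subset _ _))
  · intro h
    rw [Multiset.map_eq_zero, Finset.val_eq_zero] at h
    have : i ∈ S := by simp [S, hi]
    rw [h] at this
    simp at this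
  · rw [Multiset.map_map]
    change ∑ x ∈ S, parVec (x : Sym2 V) = 0
    have hne : ∀ v, v ≠ r → (∑ x ∈ S, parVec (x : Sym2 V)) v = 0 := by
      intro v hv
      have := congrFun hg ⟨v, hv⟩
      rw [Finset.sum_apply] at this ⊢
      rw [Finset.sum_filter]
      rw [Pi.zero_apply] at this
      refine Eq.trans ?_ this
      refine Finset.sum_congr rfl fun x _ => ?_
      have hz : ∀ a : ZMod 2, a = 0 ∨ a = 1 := by decide
      rcases hz (g x) with h | h <;> simp [h, f]
    have htot : ∑ v, (∑ x ∈ S, parVec (x : Sym2 V)) v = 0 := by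
      simp only [Finset.sum_apply]
      rw [Finset.sum_comm]
      refine Finset.sum_eq_zero fun x _ => ?_
      induction (x : Sym2 V) using Sym2.ind with
      | _ a b =>
        simp only [parVec_mk, Pi.add_apply, Finset.sum_add_distrib, Finset.sum_pi_single',
          Finset.mem_univ, if_true]
        decide
    funext v
    by_cases hv : v = r
    · subst hv
      rw [Finset.sum_eq_single v (fun b _ hb => hne b hb) (by simp)] at htot
      exact htot
    · exact hne v hv

open Classical in
theorem exists_small {V : Type*} [Fintype V] [Nonempty V] (n : ℕ) :
    ∀ M : Multiset (Sym2 V), M.card ≤ n → (M.map parVec).sum = 0 →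
    (SimpleGraph.fromEdgeSet {e | e ∈ M}).Connected →
    ∃ M' ≤ M, (M'.map parVec).sum = 0 ∧
      (SimpleGraph.fromEdgeSet {e | e ∈ M'}).Connected ∧ M'.card ≤ 2 * Fintype.card V - 2 := by
  induction n with
  | zero =>
    intro M hn hs hc
    exact ⟨M, le_rfl, hs, hc, by omega⟩
  | succ n ih =>
    intro M hn hs hc
    by_cases hM : M.card ≤ 2 * Fintype.card V - 2
    · exact ⟨M, le_rfl, hs, hc, hM⟩
    obtain ⟨F, hF, hFt⟩ := hc.exists_isTree_le
    have hcard := hFt.card_edgeFinset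
    have hFM : F.edgeFinset.val ≤ M := by
      rw [Multiset.le_iff_subset F.edgeFinset.nodup]
      intro e he
      have he' : e ∈ F.edgeSet := by simpa using he
      have := SimpleGraph.edgeSet_mono hF he'
      rw [SimpleGraph.edgeSet_fromEdgeSet] at this
      exact this.1
    obtain ⟨R, rfl⟩ := Multiset.le_iff_exists_add.1 hFM
    have hcv : F.edgeFinset.val.card = F.edgeFinset.card := rfl
    rw [Multiset.card_add] at hM hn
    obtain ⟨C, hCR, hC0, hCs⟩ := exists_even_sub R (by omega)
    obtain ⟨R', rfl⟩ := Multiset.le_iff_exists_add.1 hCR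
    have hCp : 0 < C.card := Multiset.card_pos.2 hC0
    rw [Multiset.card_add] at hM hn
    obtain ⟨M', h1, h2, h3, h4⟩ := ih (F.edgeFinset.val + R')
      (by rw [Multiset.card_add]; omega)
      (by
        rw [Multiset.map_add, Multiset.map_add, Multiset.sum_add, Multiset.sum_add, hCs,
          zero_add] at hs
        rw [Multiset.map_add, Multiset.sum_add, hs])
      (by
        refine hFt.connected.mono ?_
        intro a b hab
        rw [SimpleGraph.fromEdgeSet_adj]
        refine ⟨?_, hab.ne⟩
        simp only [Set.mem_ofPred_eq, Multiset.mem_add]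
        left
        simpa using hab)
    refine ⟨M', h1.trans ?_, h2, h3, h4⟩
    gcongr
    exact Multiset.le_add_left _ _

/-- Let `G` be a connected graph on `n` vertices with positive
integer edge weights `c`, let `W` be the minimum weight of a closed walk
containing all vertices of `G`, and let `T` be a closed walk of length
`2n - 2 + k` containing all vertices of `G`. Then the weight of `T` is at
least `W + k`. -/
theorem statement9 {V : Type*} [Fintype V] {G : SimpleGraph V}
    (hconn : G.Connected)
    (c : V → V → ℕ)
    (hsymm : ∀ u v : V, c u v = c v u)
    (hpos : ∀ u v : V, G.Adj u v → 0 < c u v)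
    (W : ℕ)
    (hW : IsLeast {t | ∃ (x : V) (p : G.Walk x x),
      (∀ v : V, v ∈ p.support) ∧ walkWeight c p = t} W)
    (k : ℕ) (u : V) (T : G.Walk u u)
    (hspan : ∀ v : V, v ∈ T.support)
    (hlen : T.length = 2 * Fintype.card V - 2 + k) :
    W + k ≤ walkWeight c T := by
  classical
  haveI : Nonempty V := ⟨u⟩
  let c' : Sym2 V → ℕ := Sym2.lift ⟨c, hsymm⟩
  have hww : ∀ {a : V} (p : G.Walk a a),
      walkWeight c p = ((p.edges : Multiset (Sym2 V)).map c').sum := by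
    intro a p
    unfold walkWeight SimpleGraph.Walk.edges
    rw [Multiset.map_coe, Multiset.sum_coe, List.map_map]
    rfl
  have hTG : ∀ e ∈ (T.edges : Multiset (Sym2 V)), e ∈ G.edgeSet := fun e he =>
    T.edges_subset_edgeSet (Multiset.mem_coe.1 he)
  have hTc : (SimpleGraph.fromEdgeSet {e | e ∈ (T.edges : Multiset (Sym2 V))}).Connected := by
    have key : ∀ v, (SimpleGraph.fromEdgeSet {e | e ∈ (T.edges : Multiset (Sym2 V))}).Reachable
        u v := by
      intro v
      refine ⟨((T.takeUntil v (hspan v)).transfer _ ?_)⟩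
      intro e he
      have he' := T.edges_takeUntil_subset (hspan v) he
      rw [SimpleGraph.edgeSet_fromEdgeSet]
      exact ⟨Multiset.mem_coe.2 he', G.not_isDiag_of_mem_edgeSet (T.edges_subset_edgeSet he')⟩
    exact SimpleGraph.Connected.mk fun a b => (key a).symm.trans (key b)
  obtain ⟨M, hMT, hMs, hMc, hMcard⟩ := exists_small _ (T.edges : Multiset (Sym2 V)) le_rfl
    (by rw [walk_par, parAdd_self]) hTc
  obtain ⟨p, hpM, hp⟩ := exists_spanning_closed (G := G) M
    (fun e he => hTG e (Multiset.mem_of_le hMT he)) hMs hMc u _ SimpleGraph.Walk.nil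
    (by simp) le_rfl
  have hWp : W ≤ walkWeight c p := hW.2 ⟨u, p, hp, rfl⟩
  obtain ⟨N, hN⟩ := Multiset.le_iff_exists_add.1 (hpM.trans hMT)
  have hNk : k ≤ N.card := by
    have h1 := congrArg Multiset.card hN
    have h2 := Multiset.card_le_card hpM
    rw [Multiset.card_add] at h1
    simp only [Multiset.coe_card, SimpleGraph.Walk.length_edges] at h1 h2
    omega
  have hNw : N.card ≤ (N.map c').sum := by
    have := Multiset.card_nsmul_le_sum (s := N.map c') (a := 1) (by
      intro x hx
      obtain ⟨e, he, rfl⟩ := Multiset.mem_map.1 hx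
      have heG := hTG e (hN ▸ Multiset.mem_add.2 (Or.inr he))
      induction e using Sym2.ind with
      | _ a b => exact hpos a b heG)
    simpa using this
  rw [hww T, hN, Multiset.map_add, Multiset.sum_add, ← hww p]
  omega
end

section
/- Let V be a finite set of n vertices and let μ be a loopless multigraph on V, given by a symmetric multiplicity function assigning to each unordered pair of distinct vertices of V a natural number, such that the underlying simple graph G_μ (in which u and v are adjacent if and only if μ({u,v}) ≥ 1) of μ is connected. Suppose that the deletion of the edges of any cycle of μ disconnects μ, that is: (a) for every pair {u,v} of distinct vertices with μ({u,v}) ≥ 2, the underlying simple graph of the multigraph obtained from μ by decreasing μ({u,v}) by 2 is disconnected; and (b) for every cycle C of G_μ, the underlying simple graph of the multigraph obtained from μ by decreasing the multiplicity of every edge of C by 1 is disconnected. Then the total number of edges of μ, namely Σ_{unordered pairs {u,v}} μ({u,v}), is at most 2n − 2. -/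
/-- The underlying simple graph of a loopless multigraph given by a
multiplicity function `μ` on unordered pairs: `u` and `v` are adjacent
if and only if `μ s(u,v) ≥ 1`. -/
def underlyingGraph {V : Type*} (μ : Sym2 V → ℕ) : SimpleGraph V :=
  SimpleGraph.fromRel (fun u v => 1 ≤ μ s(u, v))

/-- Adjacency in the underlying graph. -/
theorem underlyingGraph_adj_iff {V : Type*} (μ : Sym2 V → ℕ) (u v : V) :
    (underlyingGraph μ).Adj u v ↔ u ≠ v ∧ 1 ≤ μ s(u, v) := by
  simp [underlyingGraph, Sym2.eq_swap (a := v) (b := u)]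

/-- Let `μ` be a loopless multigraph on a finite vertex set
`V` of `n` vertices whose underlying simple graph is connected, such that the
deletion of the edges of any cycle of `μ` disconnects it: (a) removing two
parallel edges between any pair of vertices disconnects the underlying graph,
and (b) removing one copy of each edge of any cycle of the underlying graph
disconnects the underlying graph. Then `μ` has at most `2n - 2` edges. -/
theorem statement10 {V : Type*} [Fintype V] [DecidableEq V]
    (μ : Sym2 V → ℕ)
    (hloopless : ∀ v : V, μ s(v, v) = 0)
    (hconn : (underlyingGraph μ).Connected)
    (ha : ∀ u v : V, u ≠ v → 2 ≤ μ s(u, v) →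
      ¬ (underlyingGraph (Function.update μ s(u, v) (μ s(u, v) - 2))).Connected)
    (hb : ∀ (x : V) (C : (underlyingGraph μ).Walk x x), C.IsCycle →
      ¬ (underlyingGraph
          (fun e => if e ∈ C.edges then μ e - 1 else μ e)).Connected) :
    ∑ e : Sym2 V, μ e ≤ 2 * Fintype.card V - 2 := by
  classical
  obtain ⟨T, hTle, hT⟩ := hconn.exists_isTree_le
  have hTμ : ∀ e ∈ T.edgeFinset, 1 ≤ μ e := by
    intro e he
    induction e with
    | h a b =>
      have := hTle (by simpa using he : T.Adj a b)
      exact ((underlyingGraph_adj_iff μ a b).1 this).2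
  -- any multigraph containing `T` is connected
  have key : ∀ ν : Sym2 V → ℕ, (∀ e ∈ T.edgeFinset, 1 ≤ ν e) →
      (underlyingGraph ν).Connected := by
    intro ν hν
    refine hT.connected.mono ?_
    intro a b hab
    exact (underlyingGraph_adj_iff ν a b).2 ⟨hab.ne, hν _ (by simpa using hab)⟩
  let ν : Sym2 V → ℕ := fun e => μ e - if e ∈ T.edgeFinset then 1 else 0
  have hν1 : ∀ e, ν e ≤ 1 := by
    intro e
    by_contra hlt
    induction e with
    | h a b =>
      have h2 : 2 ≤ μ s(a, b) := by simp only [ν] at hlt; omega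
      have hne : a ≠ b := by
        rintro rfl
        rw [hloopless] at h2
        omega
      refine ha a b hne h2 (key _ ?_)
      intro e he
      by_cases hee : e = s(a, b)
      · subst hee
        simp only [ν, he, if_true] at hlt
        simp only [Function.update_self]
        omega
      · rw [Function.update_of_ne hee]
        exact hTμ e he
  have hHle : underlyingGraph ν ≤ underlyingGraph μ := by
    intro a b hab
    rw [underlyingGraph_adj_iff] at hab ⊢
    exact ⟨hab.1, hab.2.trans (Nat.sub_le _ _)⟩
  have hH : (underlyingGraph ν).IsAcyclic := by
    intro x C hC
    refine hb x (C.mapLe hHle) ((SimpleGraph.Walk.isCycle_mapLe hHle).2 hC) (key _ ?_)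
    intro e he
    rw [SimpleGraph.Walk.edges_mapLe_eq_edges]
    split_ifs with hmem
    · have hedge := C.edges_subset_edgeSet hmem
      induction e with
      | h a b =>
        have := ((underlyingGraph_adj_iff ν a b).1 hedge).2
        simp only [ν, he, if_true] at this
        exact this
    · exact hTμ e he
  obtain ⟨F, hHF, -, hF⟩ := hconn.exists_isTree_le_of_le_of_isAcyclic hHle hH
  have hbound : ∀ e, μ e ≤ (if e ∈ T.edgeFinset then 1 else 0)
      + (if e ∈ F.edgeFinset then 1 else 0) := by
    intro e
    have h1 := hν1 e
    by_cases h0 : ν e = 0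
    · simp only [ν] at h0
      omega
    · have heF : e ∈ F.edgeFinset := by
        induction e with
        | h a b =>
          have hne : a ≠ b := by
            rintro rfl
            exact h0 (by simp [ν, hloopless])
          have := hHF ((underlyingGraph_adj_iff ν a b).2 ⟨hne, by omega⟩)
          simpa using this
      rw [if_pos heF]
      simp only [ν] at h1
      omega
  have hsum := Finset.sum_le_sum (fun e (_ : e ∈ (Finset.univ : Finset (Sym2 V))) => hbound e)
  rw [Finset.sum_add_distrib] at hsum
  simp only [Finset.sum_ite_mem, Finset.univ_inter, Finset.sum_const, smul_eq_mul,
    mul_one] at hsum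
  have cT := hT.card_edgeFinset
  have cF := hF.card_edgeFinset
  omega
end

section
/- Let G be a connected simple graph in which every vertex has degree at least 3. Then G contains a cycle C such that the graph obtained from G by deleting all edges of C is still connected. -/
theorem leaf_aux {V : Type*} [Fintype V] (F : SimpleGraph V) (hF : F.IsAcyclic) (w x : V)
    (hx : F.Adj w x) :
    ∃ y, y ≠ w ∧ F.Reachable w y ∧ ∃ z, ∀ z', F.Adj y z' → z' = z := by
  by_contra hcon
  push Not at hcon
  have key : ∀ n : ℕ, ∃ (y : V) (p : F.Walk w y), p.IsPath ∧ p.length = n + 1 := by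
    intro n
    induction n with
    | zero =>
      refine ⟨x, .cons hx .nil, ?_, by simp⟩
      simp [hx.ne]
    | succ n ih =>
      obtain ⟨y, p, hp, hl⟩ := ih
      have hyw : y ≠ w := by
        rintro rfl
        rw [SimpleGraph.Walk.isPath_iff_eq_nil] at hp
        simp [hp] at hl
      obtain ⟨z, hz, hne⟩ := hcon y hyw p.reachable p.penultimate
      by_cases hs : z ∈ p.support
      · exact absurd (hF.eq_penultimate_of_adj_end hp hz hs) hne
      · exact ⟨z, p.concat hz, hp.concat hs hz, by simp [hl]⟩
  obtain ⟨y, p, hp, hl⟩ := key (Fintype.card V)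
  have := hp.length_lt
  omega

/-- `K` is a connected subgraph on the vertex set `S`, and `G \ K` has a cycle. -/
def GoodPair {V : Type*} (G : SimpleGraph V) (S : Finset V) (K : SimpleGraph V) : Prop :=
  K ≤ G ∧ (∀ u ∈ S, ∀ v ∈ S, K.Reachable u v) ∧ (∀ u v, K.Adj u v → u ∈ S) ∧
    ¬ (G \ K).IsAcyclic

theorem exists_nbr_of_ncard {V : Type*} [Fintype V]
    (G : SimpleGraph V) [DecidableRel G.Adj] (v : V) (hv : 3 ≤ G.degree v) (A : Set V)
    (hA : A.ncard ≤ 2) : ∃ x, G.Adj v x ∧ x ∉ A := by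
  by_contra hcon
  push Not at hcon
  have h1 : G.neighborSet v ⊆ A := fun x hx => hcon x hx
  have h2 := Set.ncard_le_ncard h1 (Set.toFinite A)
  have h3 : (G.neighborSet v).ncard = G.degree v := by
    rw [Set.ncard_eq_toFinset_card', ← G.card_neighborFinset_eq_degree]
    rfl
  omega

theorem good_step {V : Type*} [Fintype V] [DecidableEq V]
    (G : SimpleGraph V) [DecidableRel G.Adj]
    (hconn : G.Connected) (hdeg : ∀ v : V, 3 ≤ G.degree v) (S : Finset V) (K : SimpleGraph V)
    (hS : S.Nonempty) (hSu : S ≠ Finset.univ) (hg : GoodPair G S K) :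
    ∃ S' K', GoodPair G S' K' ∧ S'.card = S.card + 1 := by
  by_contra hcon
  obtain ⟨hKG, hKr, hKS, hcyc⟩ := hg
  -- deleting any boundary edge destroys all cycles
  have hbd : ∀ a b, G.Adj a b → a ∈ S → b ∉ S → ((G \ K).deleteEdges {s(a, b)}).IsAcyclic := by
    intro a b hab ha hb
    by_contra hna
    apply hcon
    have hadj : (K ⊔ SimpleGraph.edge a b).Adj a b := by
      right; simp [SimpleGraph.edge_adj, hab.ne]
    have hr : ∀ u ∈ insert b S, (K ⊔ SimpleGraph.edge a b).Reachable a u := by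
      intro u hu
      rcases Finset.mem_insert.1 hu with rfl | hu
      · exact hadj.reachable
      · exact (hKr a ha u hu).mono le_sup_left
    refine ⟨insert b S, K ⊔ SimpleGraph.edge a b, ⟨?_, ?_, ?_, ?_⟩, ?_⟩
    · refine sup_le hKG ?_
      intro u v huv
      rw [SimpleGraph.edge_adj] at huv
      rcases huv.1 with ⟨rfl, rfl⟩ | ⟨rfl, rfl⟩
      · exact hab
      · exact hab.symm
    · intro u hu v hv
      exact (hr u hu).symm.trans (hr v hv)
    · intro u v huv
      rcases huv with h | h
      · exact Finset.mem_insert_of_mem (hKS u v h)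
      · rw [SimpleGraph.edge_adj] at h
        rcases h.1 with ⟨rfl, rfl⟩ | ⟨rfl, rfl⟩
        · exact Finset.mem_insert_of_mem ha
        · exact Finset.mem_insert_self _ _
    · intro h
      apply hna
      refine h.anti ?_
      intro u v huv
      simp only [SimpleGraph.deleteEdges_adj, SimpleGraph.sdiff_adj, Set.mem_singleton_iff] at huv
      refine ⟨huv.1.1, ?_⟩
      rintro (h | h)
      · exact huv.1.2 h
      · rw [SimpleGraph.edge_adj] at h
        apply huv.2
        rcases h.1 with ⟨rfl, rfl⟩ | ⟨rfl, rfl⟩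
        · rfl
        · exact Sym2.eq_swap
    · exact Finset.card_insert_of_notMem hb
  -- a boundary edge
  obtain ⟨s, w, hsw, hs, hw⟩ : ∃ s w, G.Adj s w ∧ s ∈ S ∧ w ∉ S := by
    obtain ⟨a, ha⟩ := hS
    obtain ⟨b, hb⟩ : ∃ b, b ∉ S := by
      by_contra h
      push Not at h
      exact hSu (Finset.eq_univ_iff_forall.2 h)
    obtain ⟨p⟩ := hconn.preconnected a b
    obtain ⟨d, -, h1, h2⟩ := p.exists_boundary_dart (S : Set V) (by simpa using ha)
      (by simpa using hb)
    exact ⟨d.fst, d.snd, d.adj, by simpa using h1, by simpa using h2⟩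
  -- a cycle
  obtain ⟨c, C, hC⟩ : ∃ (c : V) (C : (G \ K).Walk c c), C.IsCycle := by
    simpa [SimpleGraph.IsAcyclic] using hcyc
  have hBC : ∀ a b, G.Adj a b → a ∈ S → b ∉ S → s(a, b) ∈ C.edges := by
    intro a b hab ha hb
    by_contra hn
    have hT : ∀ e ∈ C.edges, e ∈ ((G \ K).deleteEdges {s(a, b)}).edgeSet := by
      intro e he
      rw [SimpleGraph.edgeSet_deleteEdges]
      refine ⟨C.edges_subset_edgeSet he, ?_⟩
      rintro rfl
      exact hn he
    exact hbd a b hab ha hb _ (hC.transfer hT)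
  have hHout : ∀ a b, a ∉ S → G.Adj a b → (G \ K).Adj a b := by
    intro a b ha hab
    exact ⟨hab, fun h => ha (hKS a b h)⟩
  have hT := hbd s w hsw hs hw
  have hswC := hBC s w hsw hs hw
  have hFT : (G \ K).deleteEdges {e | e ∈ C.edges} ≤ (G \ K).deleteEdges {s(s, w)} := by
    intro u v huv
    rw [SimpleGraph.deleteEdges_adj] at huv ⊢
    refine ⟨huv.1, fun h => huv.2 ?_⟩
    rw [Set.mem_singleton_iff.1 h]
    exact hswC
  have hF := hT.anti hFT
  have hwC : w ∈ C.support := C.snd_mem_support_of_mem_edges hswC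
  -- an edge at w off the cycle
  obtain ⟨x, hwx, hxC⟩ := exists_nbr_of_ncard G w (hdeg w) (C.toSubgraph.neighborSet w)
    (hC.ncard_neighborSet_toSubgraph_eq_two hwC).le
  have hFwx : ((G \ K).deleteEdges {e | e ∈ C.edges}).Adj w x := by
    rw [SimpleGraph.deleteEdges_adj]
    refine ⟨hHout w x hw hwx, fun h => hxC ?_⟩
    exact SimpleGraph.Walk.adj_toSubgraph_iff_mem_edges.2 h
  obtain ⟨y, hyw, hry, z, hz⟩ := leaf_aux _ hF w x hFwx
  have hyS : y ∉ S := by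
    intro hy
    obtain ⟨p⟩ := hry.symm
    obtain ⟨d, -, h1, h2⟩ := p.exists_boundary_dart (S : Set V) (by simpa using hy)
      (by simpa using hw)
    have hd := d.adj
    rw [SimpleGraph.deleteEdges_adj] at hd
    exact hd.2 (hBC _ _ hd.1.1 (by simpa using h1) (by simpa using h2))
  have hyC : y ∈ C.support := by
    by_contra hyC
    obtain ⟨x', hyx, hx'⟩ := exists_nbr_of_ncard G y (hdeg y) {z} (by simp)
    apply hx'
    apply hz
    rw [SimpleGraph.deleteEdges_adj]
    exact ⟨hHout y x' hyS hyx, fun h => hyC (C.fst_mem_support_of_mem_edges h)⟩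
  -- a walk from w to y along the cycle avoiding the boundary edge
  obtain ⟨q, hqC, hqs⟩ : ∃ q : (G \ K).Walk w y, (∀ e ∈ q.edges, e ∈ C.edges) ∧
      s(s, w) ∉ q.edges := by
    have hC' := hC.rotate hwC
    have hy' : y ∈ (C.rotate w hwC).support := by simpa using hyC
    have hE : ∀ e, e ∈ (C.rotate w hwC).edges → e ∈ C.edges := fun e he =>
      (C.rotate_edges w hwC).mem_iff.1 he
    have hnd := hC'.edges_nodup
    have hsp := SimpleGraph.Walk.take_spec (C.rotate w hwC) hy'
    have hed : (C.rotate w hwC).edges = ((C.rotate w hwC).takeUntil y hy').edges ++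
        ((C.rotate w hwC).dropUntil y hy').edges := by
      rw [← SimpleGraph.Walk.edges_append, hsp]
    rw [hed] at hnd
    by_cases h : s(s, w) ∈ ((C.rotate w hwC).takeUntil y hy').edges
    · refine ⟨((C.rotate w hwC).dropUntil y hy').reverse, ?_, ?_⟩
      · intro e he
        apply hE
        rw [hed]
        simp only [SimpleGraph.Walk.edges_reverse, List.mem_reverse] at he
        exact List.mem_append_right _ he
      · simp only [SimpleGraph.Walk.edges_reverse, List.mem_reverse]
        exact fun h' => (List.nodup_append.1 hnd).2.2 _ h _ h' rfl
    · refine ⟨_, ?_, h⟩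
      intro e he
      apply hE
      rw [hed]
      exact List.mem_append_left _ he
  have hqT : ∀ e ∈ q.edges, e ∈ ((G \ K).deleteEdges {s(s, w)}).edgeSet := by
    intro e he
    rw [SimpleGraph.edgeSet_deleteEdges]
    refine ⟨q.edges_subset_edgeSet he, ?_⟩
    rintro rfl
    exact hqs he
  obtain ⟨p⟩ := hry
  have heq := hT.path_unique (p.mapLe hFT).toPath (q.transfer _ hqT).toPath
  have hnn : ¬ ((p.mapLe hFT).toPath : ((G \ K).deleteEdges {s(s, w)}).Walk w y).Nil :=
    SimpleGraph.Walk.not_nil_of_ne hyw.symm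
  obtain ⟨e, he⟩ := List.exists_mem_of_ne_nil _ (fun h => hnn (SimpleGraph.Walk.edges_eq_nil.1 h))
  have he1 := SimpleGraph.Walk.edges_toPath_subset_edges _ he
  rw [heq] at he
  have he2 := SimpleGraph.Walk.edges_toPath_subset_edges _ he
  rw [SimpleGraph.Walk.edges_mapLe_eq_edges] at he1
  rw [SimpleGraph.Walk.edges_transfer] at he2
  have := p.edges_subset_edgeSet he1
  rw [SimpleGraph.edgeSet_deleteEdges] at this
  exact this.2 (hqC e he2)

/-- Every connected finite simple graph with minimum degree
at least 3 contains a cycle whose edge deletion leaves the graph connected. -/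
theorem statement11 {V : Type*} [Fintype V] [DecidableEq V]
    (G : SimpleGraph V) [DecidableRel G.Adj]
    (hconn : G.Connected)
    (hdeg : ∀ v : V, 3 ≤ G.degree v) :
    ∃ (u : V) (C : G.Walk u u), C.IsCycle ∧
      (G.deleteEdges {e | e ∈ C.edges}).Connected := by
  have hne := hconn.nonempty
  obtain ⟨v⟩ := hconn.nonempty
  have hGc : ¬ G.IsAcyclic := by
    intro hG
    obtain ⟨x, hx, -⟩ := exists_nbr_of_ncard G v (hdeg v) ∅ (by simp)
    obtain ⟨y, -, -, z, hz⟩ := leaf_aux G hG v x hx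
    obtain ⟨x', hx', hn⟩ := exists_nbr_of_ncard G y (hdeg y) {z} (by simp)
    exact hn (hz x' hx')
  obtain ⟨K, hKG, hKr, -, hcyc⟩ : ∃ K, GoodPair G Finset.univ K := by
    by_contra hcon
    have key : ∀ n : ℕ, ∃ S K, GoodPair G S K ∧ S.card = n + 1 := by
      intro n
      induction n with
      | zero =>
        refine ⟨{v}, ⊥, ⟨bot_le, ?_, ?_, by simpa using hGc⟩, by simp⟩
        · intro a ha b hb
          rw [Finset.mem_singleton.1 ha, Finset.mem_singleton.1 hb]
        · intro a b hab
          exact absurd hab (by simp)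
      | succ n ih =>
        obtain ⟨S, K, hg, hc⟩ := ih
        have := good_step G hconn hdeg S K (Finset.card_pos.1 (by omega))
          (by rintro rfl; exact hcon ⟨K, hg⟩) hg
        rwa [hc] at this
    obtain ⟨S, K, -, hc⟩ := key (Fintype.card V)
    have := S.card_le_univ
    omega
  obtain ⟨c, C, hC⟩ : ∃ (c : V) (C : (G \ K).Walk c c), C.IsCycle := by
    simpa [SimpleGraph.IsAcyclic] using hcyc
  have hle : G \ K ≤ G := sdiff_le
  refine ⟨c, C.mapLe hle, hC.mapLe hle, ?_⟩
  have hK : K.Connected := ⟨fun a b => hKr a (by simp) b (by simp)⟩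
  refine hK.mono ?_
  intro a b hab
  rw [SimpleGraph.deleteEdges_adj]
  refine ⟨hKG hab, fun h => ?_⟩
  simp only [Set.mem_setOf_eq, SimpleGraph.Walk.edges_mapLe_eq_edges] at h
  have := C.edges_subset_edgeSet h
  exact this.2 hab
end
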